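/- Let W : U ⊂ ℝᵏ → ℝ be real analytic near 0 with ∇W(0) = 0. Then there exist a neighborhood of 0 and an exponent α ∈ (1, 2) such that |∇W(x)|² ≥ |W(x) - W(0)|^α on that neighborhood. -/

import Mathlib

open Filter Real

/-!
Let `f` be the germ of `W - W 0`. It is enough that `f ^ n ∈ J ^ (n + 1)` for some `n`, where `J` is
the ideal generated by `f` and its derivatives: then `|f| ^ n ≤ C (|f| + ‖f'‖) ^ (n + 1)`, which
bounds `|f|` by a power of `‖f'‖` that is better than the first. The membership says that `f` is a
unit in the chart of the blow-up of `J` on which `f` generates `J`.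

If it is not, localize the chart at a minimal prime over `f` and let `V` be this local domain: there
every nonunit has a power divisible by `f ^ 2`, while `f` divides its own derivatives. By induction
on the dimension, Weierstrass division provides a polynomial `G` and a point `z` over `V` such that
`f ≡ G(z)` modulo `f ^ 2`, and likewise for the derivatives. Hence `G(z)` is a nonunit that divides
each `(∂G/∂Xᵢ)(z)`. As `G` is a polynomial, this can be moved from `V` to a discrete valuation ring,
and then to an arc in affine space, along which the derivative of `G` would vanish to at least the
order of `G`.
-/

open scoped Topology ENNReal

universe u v

/-! ### Arcs through the zero set of a polynomial -/

section Arcs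

open IsLocalRing Polynomial

theorem finite_integralClosure_fractionRing (k : Type*) [Field k] [CharZero k]
    (B : Type*) [CommRing B] [IsDomain B] [Algebra k B] [Algebra.FiniteType k B] :
    Module.Finite B (integralClosure B (FractionRing B)) := by
  obtain ⟨s, g, hg, hfin⟩ := exists_finite_inj_algHom_of_fg k B
  algebraize [g.toRingHom]
  let A := MvPolynomial (Fin s) k
  have : FaithfulSMul A B := (faithfulSMul_iff_algebraMap_injective A B).2 hg
  have : Module.Finite A B := hfin
  let _ : Algebra (FractionRing A) (FractionRing B) := FractionRing.liftAlgebra A (FractionRing B)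
  have : IsIntegralClosure (integralClosure B (FractionRing B)) A (FractionRing B) :=
    ⟨Subtype.val_injective, fun {x} ↦ ⟨fun hx ↦ ⟨⟨x, hx.tower_top⟩, rfl⟩, fun ⟨y, hy⟩ ↦
      hy ▸ isIntegral_trans (A := B) _ y.2⟩⟩
  have := IsIntegralClosure.finite A (FractionRing A) (FractionRing B)
    (integralClosure B (FractionRing B))
  exact Module.Finite.of_restrictScalars_finite A B _

theorem isDiscreteValuationRing_localization_of_mem_minimalPrimes {D : Type*} [CommRing D]
    [IsDomain D] [IsNoetherianRing D] [IsIntegrallyClosed D] {x : D} (hx : x ≠ 0)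
    {p : Ideal D} [p.IsPrime] (hp : p ∈ (Ideal.span {x}).minimalPrimes) :
    IsDiscreteValuationRing (Localization.AtPrime p) := by
  have hxp : x ∈ p := hp.1.2 (Ideal.mem_span_singleton_self x)
  have hp0 : p ≠ ⊥ := fun h ↦ hx (by simpa [h] using hxp)
  have hfield : ¬ IsField (Localization.AtPrime p) :=
    IsLocalization.AtPrime.not_isField D hp0 _
  have hheight : p.height ≤ 1 := Ideal.height_le_one_of_isPrincipal_of_mem_minimalPrimes _ _ hp
  have : Ring.KrullDimLE 1 (Localization.AtPrime p) := by
    rw [Ring.krullDimLE_iff, IsLocalization.AtPrime.ringKrullDim_eq_height p]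
    exact_mod_cast hheight
  have : IsIntegrallyClosed (Localization.AtPrime p) :=
    isIntegrallyClosed_of_isLocalization _ p.primeCompl p.primeCompl_le_nonZeroDivisors
  have : IsDedekindDomain (Localization.AtPrime p) :=
    { maximalOfPrime := fun h _ ↦ Ideal.isMaximal_of_isPrime_of_ne_bot _ h }
  exact ((IsDiscreteValuationRing.TFAE _ hfield).out 0 2).2 this

theorem exists_isDiscreteValuationRing_mem_maximalIdeal (k : Type*) [Field k] [CharZero k]
    {B : Type u} [CommRing B] [IsDomain B] [Algebra k B] [Algebra.FiniteType k B] {x : B}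
    (hx0 : x ≠ 0) (hx : ¬ IsUnit x) :
    ∃ (V : Type u) (_ : CommRing V) (_ : IsDomain V) (_ : IsDiscreteValuationRing V)
      (_ : Algebra k V) (_ : Algebra.EssFiniteType k V) (ψ : B →ₐ[k] V),
      Function.Injective ψ ∧ ψ x ∈ maximalIdeal V := by
  let D := integralClosure B (FractionRing B)
  have := finite_integralClosure_fractionRing k B
  have : IsIntegrallyClosed D :=
    integralClosure.isIntegrallyClosedOfFiniteExtension (FractionRing B)
  have : Algebra.FiniteType k D := Algebra.FiniteType.trans (S := B) inferInstance inferInstance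
  have : IsNoetherianRing D := Algebra.FiniteType.isNoetherianRing k D
  have hinj : Function.Injective (algebraMap B D) := FaithfulSMul.algebraMap_injective B D
  have hy0 : algebraMap B D x ≠ 0 := by rwa [Ne, map_eq_zero_iff _ hinj]
  have hy : ¬ IsUnit (algebraMap B D x) := fun h ↦ hx (isUnit_of_map_unit (algebraMap B D) x h)
  obtain ⟨p, hp⟩ := Ideal.nonempty_minimalPrimes (mt Ideal.span_singleton_eq_top.1 hy)
  have := hp.1.1
  have hinj' := IsLocalization.injective (Localization.AtPrime p) p.primeCompl_le_nonZeroDivisors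
  refine ⟨Localization.AtPrime p, inferInstance, inferInstance,
    isDiscreteValuationRing_localization_of_mem_minimalPrimes hy0 hp, inferInstance, inferInstance,
    (IsScalarTower.toAlgHom k D _).comp (IsScalarTower.toAlgHom k B D), hinj'.comp hinj, ?_⟩
  exact (IsLocalization.AtPrime.to_map_mem_maximal_iff _ p _).2
    (hp.1.2 (Ideal.mem_span_singleton_self _))

theorem exists_surjective_aeval_of_formallySmooth {k L Q : Type*} [CommRing k] [CommRing L]
    [Algebra k L] [Algebra.FormallySmooth k L] [CommRing Q] [Algebra k Q] {g : Q →ₐ[k] L}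
    (hg : Function.Surjective g) {t : Q} (ht : RingHom.ker g = Ideal.span {t}) {N : ℕ}
    (htN : t ^ N = 0) :
    ∃ Φ : L[X] →ₐ[k] Q, Function.Surjective Φ ∧ Φ X = t ∧ ∀ p, g (Φ p) = p.coeff 0 := by
  have hnil : IsNilpotent (RingHom.ker (g : Q →+* L)) :=
    ⟨N, by rw [show RingHom.ker (g : Q →+* L) = Ideal.span {t} from ht,
      Ideal.span_singleton_pow, htN, Ideal.span_singleton_zero, Ideal.zero_eq_bot]⟩
  let σ := Algebra.FormallySmooth.liftOfSurjective (AlgHom.id k L) g hg hnil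
  have hσ (a : L) : g (σ a) = a := Algebra.FormallySmooth.liftOfSurjective_apply _ g hg hnil a
  have htg : g t = 0 := by
    rw [← RingHom.mem_ker, ht]; exact Ideal.mem_span_singleton_self t
  let Φ : L[X] →ₐ[k] Q := aevalTower σ t
  have hΦX : Φ X = t := aevalTower_X σ t
  have hΦC (a : L) : Φ (C a) = σ a := aevalTower_C σ t a
  have approx (i : ℕ) (y : Q) : ∃ p, t ^ i ∣ y - Φ p := by
    induction i generalizing y with
    | zero => exact ⟨0, by simp⟩
    | succ i ih =>
      have hy : y - σ (g y) ∈ RingHom.ker g := by simp [RingHom.mem_ker, hσ]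
      obtain ⟨w, hw⟩ := Ideal.mem_span_singleton.1 (ht ▸ hy)
      obtain ⟨p, hp⟩ := ih w
      refine ⟨C (g y) + X * p, ?_⟩
      have : y - Φ (C (g y) + X * p) = t * (w - Φ p) := by
        rw [map_add, map_mul, hΦX, hΦC, mul_sub, ← hw]; ring
      rw [this, pow_succ']
      exact mul_dvd_mul_left t hp
  refine ⟨Φ, fun y ↦ ?_, hΦX, fun p ↦ ?_⟩
  · obtain ⟨p, hp⟩ := approx N y
    rw [htN, zero_dvd_iff] at hp
    exact ⟨p, (sub_eq_zero.1 hp).symm⟩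
  · rw [← X_mul_divX_add p]
    simp only [map_add, map_mul, hΦX, hΦC, hσ, htg]
    simp

theorem derivation_aeval {k A ι : Type*} [CommRing k] [CommRing A] [Algebra k A] [Fintype ι]
    (D : Derivation k A A) (p : ι → A) (F : MvPolynomial ι k) :
    D (MvPolynomial.aeval p F) = ∑ j, MvPolynomial.aeval p (MvPolynomial.pderiv j F) * D (p j) := by
  classical
  induction F using MvPolynomial.induction_on with
  | C a => simp
  | add F G hF hG => simp only [map_add, hF, hG, add_mul, Finset.sum_add_distrib]
  | mul_X F i hF =>
    have hX : ∑ j, MvPolynomial.aeval p (MvPolynomial.pderiv j (MvPolynomial.X (R := k) i)) *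
        D (p j) = D (p i) := by
      rw [Finset.sum_eq_single i (fun j _ hj ↦ by simp [MvPolynomial.pderiv_X_of_ne hj.symm])
        (by simp), MvPolynomial.pderiv_X_self, map_one, one_mul]
    simp only [map_mul, MvPolynomial.aeval_X, Derivation.leibniz, hF, smul_eq_mul, map_add,
      add_mul, Finset.sum_add_distrib, ← hX, Finset.mul_sum, mul_assoc]

theorem X_pow_succ_dvd_aeval {k L ι : Type*} [CommRing k] [Field L] [CharZero L] [Algebra k L]
    [Finite ι] {F : MvPolynomial ι k} {p : ι → L[X]} {n : ℕ} (hn : n ≠ 0)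
    (hF : X ^ n ∣ MvPolynomial.aeval p F)
    (hpderiv : ∀ j, X ^ n ∣ MvPolynomial.aeval p (MvPolynomial.pderiv j F)) :
    X ^ (n + 1) ∣ MvPolynomial.aeval p F := by
  have := Fintype.ofFinite ι
  have hder : X ^ n ∣ derivative (MvPolynomial.aeval p F) := by
    have := derivation_aeval ((derivative' (R := L)).restrictScalars k) p F
    simp only [Derivation.restrictScalars_apply, derivative'_apply] at this
    exact this ▸ Finset.dvd_sum fun j _ ↦ (hpderiv j).mul_right _
  rw [X_pow_dvd_iff] at hF hder ⊢
  intro d hd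
  obtain hd | rfl := Nat.lt_succ_iff_lt_or_eq.1 hd
  · exact hF d hd
  · obtain ⟨m, rfl⟩ := Nat.exists_eq_succ_of_ne_zero hn
    have := hder m m.lt_succ_self
    rw [coeff_derivative] at this
    exact (mul_eq_zero.1 this).resolve_right (by exact_mod_cast m.succ_ne_zero)

theorem X_pow_dvd_iff_pow_dvd_of_map_eq_mk {L V : Type*} [CommRing L] [CommRing V] [IsDomain V]
    {ϖ : V} (hϖ : ϖ ≠ 0) {n : ℕ} {Φ : L[X] →+* V ⧸ Ideal.span {ϖ ^ n}}
    (hX : Φ X = Ideal.Quotient.mk _ ϖ)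
    (hcoeff : ∀ (P : L[X]) (v : V), Φ P = Ideal.Quotient.mk _ v → ϖ ∣ v → P.coeff 0 = 0)
    {P : L[X]} {v : V} (hv : Φ P = Ideal.Quotient.mk _ v) {i : ℕ} (hi : i ≤ n) :
    X ^ i ∣ P ↔ ϖ ^ i ∣ v := by
  have dvd_sub {i : ℕ} {R : L[X]} {w : V} (hv : Φ (X ^ i * R) = Ideal.Quotient.mk _ v)
      (hw : Ideal.Quotient.mk _ w = Φ R) : ϖ ^ n ∣ v - ϖ ^ i * w := by
    rw [← Ideal.mem_span_singleton, ← Ideal.Quotient.eq, ← hv, map_mul, map_pow, map_mul, map_pow,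
      hX, hw]
  constructor
  · rintro ⟨R, rfl⟩
    obtain ⟨w, hw⟩ := Ideal.Quotient.mk_surjective (Φ R)
    exact (dvd_iff_dvd_of_dvd_sub ((pow_dvd_pow ϖ hi).trans (dvd_sub hv hw))).2 ⟨w, rfl⟩
  · intro hdvd
    induction i with
    | zero => simp
    | succ i ih =>
      obtain ⟨R, rfl⟩ := ih (by lia) ((pow_dvd_pow ϖ i.le_succ).trans hdvd)
      obtain ⟨w, hw⟩ := Ideal.Quotient.mk_surjective (Φ R)
      have hϖw : ϖ ^ i * ϖ ∣ ϖ ^ i * w := by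
        rw [← pow_succ]
        exact (dvd_iff_dvd_of_dvd_sub ((pow_dvd_pow ϖ hi).trans (dvd_sub hv hw))).1 hdvd
      rw [mul_dvd_mul_iff_left (pow_ne_zero i hϖ)] at hϖw
      rw [pow_succ]
      exact mul_dvd_mul_left _ (X_dvd_iff.2 (hcoeff R w hw.symm hϖw))

section DiscreteValuationRing

variable {k V : Type*} [Field k] [CharZero k] [CommRing V] [IsDomain V]
  [IsDiscreteValuationRing V] [Algebra k V] [Algebra.EssFiniteType k V] {ϖ : V}

theorem exists_surjective_polynomial_quotient (hϖ : Irreducible ϖ) (N : ℕ) :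
    ∃ Φ : (ResidueField V)[X] →ₐ[k] V ⧸ Ideal.span {ϖ ^ (N + 1)}, Function.Surjective Φ ∧
      ∀ (P : (ResidueField V)[X]) (v : V), Φ P = Ideal.Quotient.mk _ v →
        ∀ i ≤ N + 1, X ^ i ∣ P ↔ ϖ ^ i ∣ v := by
  have : Algebra.EssFiniteType k (ResidueField V) :=
    inferInstanceAs (Algebra.EssFiniteType k (V ⧸ maximalIdeal V))
  have hle : Ideal.span {ϖ ^ (N + 1)} ≤ maximalIdeal V := by
    rw [hϖ.maximalIdeal_eq, Ideal.span_singleton_le_span_singleton]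
    exact dvd_pow_self ϖ N.succ_ne_zero
  let mk : V →ₐ[k] V ⧸ Ideal.span {ϖ ^ (N + 1)} := Ideal.Quotient.mkₐ k _
  let g : (V ⧸ Ideal.span {ϖ ^ (N + 1)}) →ₐ[k] ResidueField V := Ideal.Quotient.factorₐ k hle
  have hmk (v w : V) : mk v = mk w ↔ ϖ ^ (N + 1) ∣ v - w :=
    Ideal.Quotient.eq.trans Ideal.mem_span_singleton
  have hgmk (v : V) : g (mk v) = 0 ↔ ϖ ∣ v :=
    (residue_eq_zero_iff v).trans (by rw [hϖ.maximalIdeal_eq, Ideal.mem_span_singleton])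
  have hker : RingHom.ker g = Ideal.span {mk ϖ} := by
    ext q
    obtain ⟨v, rfl⟩ := Ideal.Quotient.mkₐ_surjective k _ q
    rw [RingHom.mem_ker, hgmk, Ideal.mem_span_singleton]
    refine ⟨map_dvd mk, fun ⟨w, hw⟩ ↦ (hgmk v).1 ?_⟩
    rw [show mk v = mk ϖ * w from hw, map_mul, (hgmk ϖ).2 dvd_rfl, zero_mul]
  have hnil : mk ϖ ^ (N + 1) = 0 := by rw [← map_pow, ← map_zero mk, hmk, sub_zero]
  obtain ⟨Φ, hΦ, hΦX, hΦ0⟩ := exists_surjective_aeval_of_formallySmooth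
    (Ideal.Quotient.factor_surjective hle) hker hnil
  refine ⟨Φ, hΦ, fun P v hv i hi ↦ X_pow_dvd_iff_pow_dvd_of_map_eq_mk
    (Φ := (Φ : (ResidueField V)[X] →+* V ⧸ Ideal.span {ϖ ^ (N + 1)})) hϖ.ne_zero hΦX ?_ hv hi⟩
  intro R w hw hϖw
  rw [← hΦ0, ← (hgmk w).2 hϖw]
  exact congrArg g hw

theorem exists_polynomial_arc (hϖ : Irreducible ϖ) {ι : Type*} (y : ι → V) (N : ℕ) :
    ∃ p : ι → (ResidueField V)[X], ∀ (F : MvPolynomial ι k), ∀ i ≤ N + 1,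
      X ^ i ∣ MvPolynomial.aeval p F ↔ ϖ ^ i ∣ MvPolynomial.aeval y F := by
  obtain ⟨Φ, hΦ, hdvd⟩ := exists_surjective_polynomial_quotient (k := k) hϖ N
  choose p hp using fun j ↦ hΦ (Ideal.Quotient.mkₐ k _ (y j))
  refine ⟨p, fun F ↦ hdvd _ _ ?_⟩
  rw [← Ideal.Quotient.mkₐ_eq_mk k, MvPolynomial.comp_aeval_apply,
    MvPolynomial.comp_aeval_apply, funext hp]

theorem isUnit_aeval_of_dvd_pderiv_of_isDiscreteValuationRing {ι : Type*} [Finite ι]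
    {F : MvPolynomial ι k} {y : ι → V} (hF : MvPolynomial.aeval y F ≠ 0)
    (hdvd : ∀ j, MvPolynomial.aeval y F ∣ MvPolynomial.aeval y (MvPolynomial.pderiv j F)) :
    IsUnit (MvPolynomial.aeval y F) := by
  obtain ⟨ϖ, hϖ⟩ := IsDiscreteValuationRing.exists_irreducible V
  obtain ⟨n, hn⟩ := IsDiscreteValuationRing.associated_pow_irreducible hF hϖ
  obtain rfl | hn0 := eq_or_ne n 0
  · exact associated_one_iff_isUnit.1 (by simpa using hn)
  obtain ⟨p, hp⟩ := exists_polynomial_arc (k := k) hϖ y n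
  have : CharZero (ResidueField V) :=
    charZero_of_injective_algebraMap (algebraMap k (ResidueField V)).injective
  have hXn : X ^ (n + 1) ∣ MvPolynomial.aeval p F := by
    refine X_pow_succ_dvd_aeval hn0 ?_ fun j ↦ ?_
    · exact (hp _ _ n.le_succ).2 hn.symm.dvd
    · exact (hp _ _ n.le_succ).2 (hn.symm.dvd.trans (hdvd j))
  rw [hp _ _ le_rfl] at hXn
  exact absurd ((pow_dvd_pow_iff hϖ.ne_zero hϖ.not_isUnit).1 (hXn.trans hn.dvd)) (by lia)

end DiscreteValuationRing

theorem isUnit_aeval_of_dvd_pderiv {k A ι : Type*} [Field k] [CharZero k] [CommRing A] [IsDomain A]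
    [Algebra k A] [Finite ι] {F : MvPolynomial ι k} {z : ι → A} (hF : MvPolynomial.aeval z F ≠ 0)
    (hdvd : ∀ j, MvPolynomial.aeval z F ∣ MvPolynomial.aeval z (MvPolynomial.pderiv j F)) :
    IsUnit (MvPolynomial.aeval z F) := by
  choose c hc using hdvd
  let B := Algebra.adjoin k (Set.range z ∪ Set.range c)
  have : Algebra.FiniteType k B := B.fg_iff_finiteType.1
    ⟨((Set.finite_range z).union (Set.finite_range c)).toFinset, by rw [Set.Finite.coe_toFinset]⟩
  let zB (i : ι) : B := ⟨z i, Algebra.subset_adjoin (.inl ⟨i, rfl⟩)⟩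
  let cB (i : ι) : B := ⟨c i, Algebra.subset_adjoin (.inr ⟨i, rfl⟩)⟩
  have hval (G : MvPolynomial ι k) : B.val (MvPolynomial.aeval zB G) = MvPolynomial.aeval z G :=
    MvPolynomial.comp_aeval_apply zB B.val G
  rw [← hval] at hF ⊢
  by_contra hunit
  obtain ⟨V, _, _, _, _, _, ψ, hψ, hmem⟩ := exists_isDiscreteValuationRing_mem_maximalIdeal k
    (ne_zero_of_map hF) fun h ↦ hunit (h.map B.val)
  have hψz (G : MvPolynomial ι k) : ψ (MvPolynomial.aeval zB G) = MvPolynomial.aeval (ψ ∘ zB) G :=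
    MvPolynomial.comp_aeval_apply zB ψ G
  rw [hψz] at hmem
  refine hmem (isUnit_aeval_of_dvd_pderiv_of_isDiscreteValuationRing ?_ fun j ↦ ?_)
  · rw [← hψz]
    exact (map_ne_zero_iff ψ hψ).2 (ne_zero_of_map hF)
  · rw [← hψz, ← hψz]
    refine map_dvd ψ ⟨cB j, Subtype.val_injective ?_⟩
    exact (hval _).trans ((hc j).trans (congrArg (· * c j) (hval F).symm))

end Arcs

/-! ### A chart of the blow-up -/

theorem exists_dvd_pow_localization_of_not_isUnit {B : Type*} [CommRing B] {f : B}
    (hf : ¬IsUnit f) :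
    ∃ (p : Ideal B) (_ : p.IsPrime), f ∈ p ∧ ∀ y : Localization.AtPrime p, ¬IsUnit y →
      ∃ n, algebraMap B (Localization.AtPrime p) f ∣ y ^ n := by
  have hne : Ideal.span {f} ≠ ⊤ := fun h ↦ hf (Ideal.span_singleton_eq_top.1 h)
  obtain ⟨p, hp⟩ := Ideal.nonempty_minimalPrimes hne
  have := hp.1.1
  refine ⟨p, this, hp.1.2 (Ideal.mem_span_singleton_self f), fun y hy ↦ ?_⟩
  have hy_mem : y ∈ p.map (algebraMap B (Localization.AtPrime p)) := by
    rwa [Localization.AtPrime.map_eq_maximalIdeal]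
  rw [← IsLocalization.AtPrime.radical_map_of_mem_minimalPrimes _ p _ hp, Ideal.map_span,
    Set.image_singleton] at hy_mem
  exact hy_mem.imp fun n hn ↦ Ideal.mem_span_singleton.1 hn

section Blowup

variable {R K : Type*} [CommRing R] [Field K] [Algebra R K] (f : R) (S : Set R)

/-- The affine chart `R[s / f : s ∈ S]` of the blow-up of the ideal generated by `f` and `S`,
as a subalgebra of a field `K` containing `R`. -/
def blowupChart (K : Type*) [Field K] [Algebra R K] : Subalgebra R K :=
  Algebra.adjoin R ((fun s ↦ algebraMap R K s / algebraMap R K f) '' S)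

variable [FaithfulSMul R K] {f S}

theorem exists_mul_pow_eq_of_mem_blowupChart (hf : f ≠ 0) {b : K} (hb : b ∈ blowupChart f S K) :
    ∃ n, ∃ a ∈ Ideal.span (insert f S) ^ n, b * algebraMap R K f ^ n = algebraMap R K a := by
  set I := Ideal.span (insert f S)
  have hfI : f ∈ I := Ideal.subset_span (Set.mem_insert f S)
  have hfK : algebraMap R K f ≠ 0 := by simpa using hf
  induction hb using Algebra.adjoin_induction with
  | mem x hx =>
    obtain ⟨s, hs, rfl⟩ := hx
    exact ⟨1, s, by simpa using Ideal.subset_span (Set.mem_insert_of_mem f hs), by field_simp⟩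
  | algebraMap r => exact ⟨0, r, by simp, by simp⟩
  | add x y _ _ hx hy =>
    obtain ⟨m, a, ha, hxa⟩ := hx
    obtain ⟨n, b, hb, hyb⟩ := hy
    refine ⟨m + n, a * f ^ n + f ^ m * b, add_mem ?_ ?_, ?_⟩
    · exact pow_add I m n ▸ Ideal.mul_mem_mul ha (Ideal.pow_mem_pow hfI n)
    · exact pow_add I m n ▸ Ideal.mul_mem_mul (Ideal.pow_mem_pow hfI m) hb
    · simp only [map_add, map_mul, map_pow, ← hxa, ← hyb]; ring
  | mul x y _ _ hx hy =>
    obtain ⟨m, a, ha, hxa⟩ := hx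
    obtain ⟨n, b, hb, hyb⟩ := hy
    refine ⟨m + n, a * b, pow_add I m n ▸ Ideal.mul_mem_mul ha hb, ?_⟩
    rw [map_mul, ← hxa, ← hyb]; ring

theorem exists_pow_mem_span_pow_of_isUnit (hf : f ≠ 0)
    (hunit : IsUnit (algebraMap R (blowupChart f S K) f)) :
    ∃ n, f ^ n ∈ Ideal.span (insert f S) ^ (n + 1) := by
  obtain ⟨⟨b, hb⟩, hfb⟩ := hunit.exists_right_inv
  replace hfb : algebraMap R K f * b = 1 := congrArg Subtype.val hfb
  obtain ⟨n, a, ha, hba⟩ := exists_mul_pow_eq_of_mem_blowupChart hf hb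
  have hfa : f ^ n = f * a := by
    apply FaithfulSMul.algebraMap_injective R K
    rw [map_mul, ← hba, ← mul_assoc, hfb, one_mul, map_pow]
  exact ⟨n, hfa ▸ pow_succ' (Ideal.span (insert f S)) n ▸
    Ideal.mul_mem_mul (Ideal.subset_span (Set.mem_insert f S)) ha⟩

theorem dvd_of_mem_blowupChart (hf : f ≠ 0) {s : R} (hs : s ∈ S) :
    algebraMap R (blowupChart f S K) f ∣ algebraMap R (blowupChart f S K) s := by
  refine ⟨⟨_, Algebra.subset_adjoin ⟨s, hs, rfl⟩⟩, Subtype.ext ?_⟩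
  exact (mul_div_cancel₀ _ (by simpa using hf)).symm

end Blowup

/-! ### Weierstrass division -/

section FunctionalCalculus

variable {E 𝒜 : Type*} [NormedAddCommGroup E] [NormedSpace ℝ E]
  [NormedRing 𝒜] [NormedAlgebra ℝ 𝒜]

/-- The power series of `(x, t) ↦ h (x, t a)` for an element `a` of a normed algebra, where `p` is
the power series of `h`: the variable `t` in a monomial is replaced by `t a`. -/
noncomputable def substSnd (p : FormalMultilinearSeries ℝ (E × ℝ) ℝ) (a : 𝒜) :
    FormalMultilinearSeries ℝ (E × ℝ) 𝒜 := fun n ↦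
  ∑ s : Finset (Fin n), ((p n).compContinuousLinearMap fun i ↦
    if i ∈ s then .inr ℝ E ℝ ∘L .snd ℝ E ℝ else .inl ℝ E ℝ ∘L .fst ℝ E ℝ).smulRight (a ^ s.card)

theorem norm_substSnd_le [NormOneClass 𝒜] (p : FormalMultilinearSeries ℝ (E × ℝ) ℝ) {a : 𝒜}
    (ha : ‖a‖ ≤ 1) (n : ℕ) : ‖substSnd p a n‖ ≤ 2 ^ n * ‖p n‖ := by
  have hterm (s : Finset (Fin n)) : ‖((p n).compContinuousLinearMap fun i ↦
      if i ∈ s then .inr ℝ E ℝ ∘L .snd ℝ E ℝ else .inl ℝ E ℝ ∘L .fst ℝ E ℝ).smulRight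
        (a ^ s.card)‖ ≤ ‖p n‖ := by
    refine ContinuousMultilinearMap.opNorm_le_bound (norm_nonneg _) fun y ↦ ?_
    rw [ContinuousMultilinearMap.smulRight_apply, norm_smul]
    refine (mul_le_of_le_one_right (norm_nonneg _)
      ((norm_pow_le a _).trans (pow_le_one₀ (norm_nonneg a) ha))).trans ?_
    refine ((p n).le_opNorm _).trans (mul_le_mul_of_nonneg_left ?_ (norm_nonneg _))
    refine Finset.prod_le_prod (fun _ _ ↦ norm_nonneg _) fun i _ ↦ ?_
    dsimp only
    split_ifs
    · simpa using norm_snd_le (y i)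
    · simpa using norm_fst_le (y i)
  simpa [substSnd] using norm_sum_le_of_le Finset.univ fun s _ ↦ hterm s

theorem radius_substSnd_pos [NormOneClass 𝒜] {p : FormalMultilinearSeries ℝ (E × ℝ) ℝ} {a : 𝒜}
    (ha : ‖a‖ ≤ 1) (hp : 0 < p.radius) : 0 < (substSnd p a).radius := by
  obtain ⟨C, r, hC, hr, hbound⟩ := p.le_mul_pow_of_radius_pos hp
  have hr' : 0 < (2 * r)⁻¹ := by positivity
  refine lt_of_lt_of_le (ENNReal.ofReal_pos.2 hr') ((substSnd p a).le_radius_of_bound C fun n ↦ ?_)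
  rw [Real.coe_toNNReal _ hr'.le]
  calc ‖substSnd p a n‖ * (2 * r)⁻¹ ^ n ≤ 2 ^ n * (C * r ^ n) * (2 * r)⁻¹ ^ n := by
        gcongr
        exact (norm_substSnd_le p ha n).trans (by gcongr; exact hbound n)
    _ = C := by
        rw [inv_pow, mul_pow]
        field_simp

theorem map_substSnd_apply (p : FormalMultilinearSeries ℝ (E × ℝ) ℝ) {a : 𝒜} {ε : 𝒜 →L[ℝ] ℝ}
    {τ : ℝ} (hε : ∀ n, ε (a ^ n) = τ ^ n * ε 1) (y : E × ℝ) (n : ℕ) :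
    ε (substSnd p a n fun _ ↦ y) = (p n fun _ ↦ (y.1, τ * y.2)) * ε 1 := by
  have hsplit : (fun _ : Fin n ↦ (y.1, τ * y.2)) = (fun _ ↦ τ • (0, y.2)) + fun _ ↦ (y.1, 0) := by
    ext <;> simp
  rw [hsplit, ContinuousMultilinearMap.map_add_univ, Finset.sum_mul, substSnd,
    sum_apply, map_sum]
  refine Finset.sum_congr rfl fun s _ ↦ ?_
  have hτ := (p n).map_piecewise_smul (fun _ ↦ τ)
    (s.piecewise (fun _ ↦ ((0 : E), y.2)) fun _ ↦ (y.1, 0)) s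
  rw [Finset.prod_const] at hτ
  calc ε _ = (p n (s.piecewise (fun _ ↦ (0, y.2)) fun _ ↦ (y.1, 0))) * (τ ^ s.card * ε 1) := by
        rw [ContinuousMultilinearMap.smulRight_apply, map_smul, hε, smul_eq_mul,
          ContinuousMultilinearMap.compContinuousLinearMap_apply]
        congr 2
        funext i
        by_cases hi : i ∈ s <;> simp [hi]
    _ = (τ ^ s.card • p n (s.piecewise (fun _ ↦ (0, y.2)) fun _ ↦ (y.1, 0))) * ε 1 := by
        rw [smul_eq_mul]
        ring
    _ = _ := by
        rw [← hτ]
        congr 2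
        funext i
        by_cases hi : i ∈ s <;> simp [hi]

theorem exists_analyticAt_subst_snd [NormOneClass 𝒜] [CompleteSpace 𝒜] {h : E × ℝ → ℝ}
    (hh : AnalyticAt ℝ h 0) {a : 𝒜} (ha : ‖a‖ ≤ 1) :
    ∃ H : E × ℝ → 𝒜, AnalyticAt ℝ H 0 ∧ ∀ᶠ y in 𝓝 0, ∀ τ : ℝ, |τ| ≤ 1 → ∀ ε : 𝒜 →L[ℝ] ℝ,
      (∀ n, ε (a ^ n) = τ ^ n * ε 1) → ε (H y) = h (y.1, τ * y.2) * ε 1 := by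
  obtain ⟨p, r, hp⟩ := hh
  have hP := (substSnd p a).hasFPowerSeriesOnBall
    (radius_substSnd_pos ha (hp.r_pos.trans_le hp.r_le))
  refine ⟨_, hP.analyticAt, ?_⟩
  filter_upwards [Metric.eball_mem_nhds 0 hP.r_pos, Metric.eball_mem_nhds 0 hp.r_pos]
    with y hyP hyp τ hτ ε hε
  have hle : ‖(y.1, τ * y.2)‖ ≤ ‖y‖ := by
    rw [Prod.norm_mk, norm_mul]
    exact max_le (norm_fst_le y) ((mul_le_of_le_one_left (norm_nonneg _) hτ).trans (norm_snd_le y))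
  have hyτ : (y.1, τ * y.2) ∈ Metric.eball 0 r := by
    simp only [Metric.mem_eball, edist_zero_right] at hyp ⊢
    refine lt_of_le_of_lt ?_ hyp
    exact enorm_le_iff_norm_le.2 hle
  have hsum := (hP.hasSum hyP).mapL ε
  have hsum' := (hp.hasSum hyτ).mul_right (ε 1)
  simp only [map_substSnd_apply p hε, zero_add] at hsum hsum'
  exact hsum.unique hsum'

end FunctionalCalculus

/-- Bounded real sequences, viewed as the coefficient sequences of power series `∑ zₙ τⁿ` that
converge for `|τ| < 1`. -/
def BoundedSeq : Type := lp (fun _ : ℕ ↦ ℝ) ∞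

namespace BoundedSeq

noncomputable instance : NormedAddCommGroup BoundedSeq :=
  inferInstanceAs (NormedAddCommGroup (lp (fun _ : ℕ ↦ ℝ) ∞))

noncomputable instance : NormedSpace ℝ BoundedSeq :=
  inferInstanceAs (NormedSpace ℝ (lp (fun _ : ℕ ↦ ℝ) ∞))

instance : CompleteSpace BoundedSeq := inferInstanceAs (CompleteSpace (lp (fun _ : ℕ ↦ ℝ) ∞))

/-- The `n`-th coefficient of a power series. -/
noncomputable def coeff (n : ℕ) : BoundedSeq →L[ℝ] ℝ := lp.evalCLM ℝ (fun _ : ℕ ↦ ℝ) ∞ n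

@[ext]
theorem ext {z w : BoundedSeq} (h : ∀ n, coeff n z = coeff n w) : z = w := lp.ext (funext h)

theorem abs_coeff_le_norm (z : BoundedSeq) (n : ℕ) : |coeff n z| ≤ ‖z‖ :=
  lp.norm_apply_le_norm ENNReal.top_ne_zero z n

/-- The power series with given bounded coefficients. -/
def ofBounded (z : ℕ → ℝ) (C : ℝ) (hz : ∀ n, |z n| ≤ C) : BoundedSeq :=
  ⟨z, memℓp_infty ⟨C, Set.forall_mem_range.2 hz⟩⟩

theorem norm_ofBounded_le {z : ℕ → ℝ} {C : ℝ} (hz : ∀ n, |z n| ≤ C) : ‖ofBounded z C hz‖ ≤ C :=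
  lp.norm_le_of_forall_le ((abs_nonneg _).trans (hz 0)) hz

/-- Multiplication of a power series by its variable. -/
noncomputable def shiftRight : BoundedSeq →L[ℝ] BoundedSeq :=
  have bound (z : BoundedSeq) (n : ℕ) : |(n.casesOn 0 fun m ↦ coeff m z : ℝ)| ≤ ‖z‖ := by
    cases n with
    | zero => simp
    | succ n => exact abs_coeff_le_norm z n
  LinearMap.mkContinuous
    { toFun z := ofBounded _ ‖z‖ (bound z)
      map_add' z w := by ext (_ | n); exacts [(add_zero 0).symm, rfl]
      map_smul' c z := by ext (_ | n); exacts [(mul_zero c).symm, rfl] }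
    1 fun z ↦ (norm_ofBounded_le (bound z)).trans_eq (one_mul _).symm

/-- The left inverse of `shiftRight`, which drops the constant coefficient. -/
noncomputable def shiftLeft : BoundedSeq →L[ℝ] BoundedSeq :=
  LinearMap.mkContinuous
    { toFun z := ofBounded (fun n ↦ coeff (n + 1) z) ‖z‖ fun n ↦ abs_coeff_le_norm z (n + 1)
      map_add' _ _ := rfl
      map_smul' _ _ := rfl }
    1 fun z ↦ (norm_ofBounded_le fun n ↦ abs_coeff_le_norm z (n + 1)).trans_eq (one_mul _).symm

/-- The constant power series `1`. -/
noncomputable def unit : BoundedSeq := lp.single ∞ 0 1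

theorem norm_shiftRight_le : ‖shiftRight‖ ≤ 1 := by
  unfold shiftRight
  exact LinearMap.mkContinuous_norm_le _ zero_le_one _

theorem norm_shiftLeft_le : ‖shiftLeft‖ ≤ 1 := by
  unfold shiftLeft
  exact LinearMap.mkContinuous_norm_le _ zero_le_one _

theorem shiftLeft_mul_shiftRight : shiftLeft * shiftRight = 1 := rfl

theorem shiftLeft_unit : shiftLeft unit = 0 := by
  ext n
  exact lp.single_apply_ne (E := fun _ : ℕ ↦ ℝ) ∞ 0 1 n.succ_ne_zero

theorem coeff_zero_unit : coeff 0 unit = 1 := lp.single_apply_self (E := fun _ : ℕ ↦ ℝ) ∞ 0 1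

instance : Nontrivial BoundedSeq := ⟨⟨unit, 0, fun h ↦ by simpa [h] using coeff_zero_unit⟩⟩

theorem coeff_zero_shiftLeft_pow (n : ℕ) (z : BoundedSeq) :
    coeff 0 ((shiftLeft ^ n) z) = coeff n z := by
  induction n generalizing z with
  | zero => rfl
  | succ n ih => rw [pow_succ]; exact ih (shiftLeft z)

/-- The value `∑ zₙ τⁿ` at `τ` of the power series with coefficients `z`. The resolvent form makes
sense of the sum for `|τ| < 1` and makes it manifestly analytic in `τ`. -/
noncomputable def eval (τ : ℝ) : BoundedSeq →L[ℝ] ℝ := (coeff 0) ∘L Ring.inverse (1 - τ • shiftLeft)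

variable {τ : ℝ}

theorem isUnit_one_sub_smul_shiftLeft (hτ : |τ| < 1) : IsUnit (1 - τ • shiftLeft) := by
  apply isUnit_one_sub_of_norm_lt_one
  rw [norm_smul, Real.norm_eq_abs]
  exact (mul_le_of_le_one_right (abs_nonneg τ) norm_shiftLeft_le).trans_lt hτ

theorem analyticAt_eval (hτ : |τ| < 1) : AnalyticAt ℝ eval τ := by
  have hunit := isUnit_one_sub_smul_shiftLeft hτ
  have hinv : AnalyticAt ℝ Ring.inverse (1 - τ • shiftLeft) := analyticAt_inverse hunit.unit
  exact ((ContinuousLinearMap.compL ℝ BoundedSeq BoundedSeq ℝ (coeff 0)).analyticAt _).comp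
    (hinv.comp (f := fun τ : ℝ ↦ 1 - τ • shiftLeft)
      (analyticAt_const.sub (analyticAt_id.smul analyticAt_const)))

theorem eval_apply (hτ : |τ| < 1) (z : BoundedSeq) :
    eval τ z = coeff 0 z + τ * eval τ (shiftLeft z) := by
  have h := Ring.inverse_mul_cancel _ (isUnit_one_sub_smul_shiftLeft hτ)
  rw [mul_sub, mul_one, sub_eq_iff_eq_add] at h
  have hz := congrArg (fun T : BoundedSeq →L[ℝ] BoundedSeq ↦ coeff 0 (T z)) h
  simpa [eval] using hz

theorem eval_shiftRight (hτ : |τ| < 1) : eval τ ∘L shiftRight = τ • eval τ := by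
  ext z
  exact (eval_apply hτ (shiftRight z)).trans (zero_add _)

theorem eval_unit (hτ : |τ| < 1) : eval τ unit = 1 := by
  rw [eval_apply hτ, shiftLeft_unit, coeff_zero_unit, map_zero, mul_zero, add_zero]

theorem eval_eq_sum_add (hτ : |τ| < 1) (z : BoundedSeq) (s : ℕ) :
    eval τ z = ∑ j ∈ Finset.range s, τ ^ j * coeff j z + τ ^ s * eval τ ((shiftLeft ^ s) z) := by
  induction s with
  | zero => simp
  | succ s ih =>
    rw [ih, eval_apply hτ ((shiftLeft ^ s) z), coeff_zero_shiftLeft_pow, Finset.sum_range_succ,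
      pow_succ' shiftLeft, mul_apply_eq_comp]
    ring

theorem eval_zero : eval 0 = coeff 0 := by
  ext z
  simpa using eval_apply (τ := 0) (by simp) z

theorem eq_zero_of_eval_eq_zero {z : BoundedSeq} (hz : ∀ τ : ℝ, |τ| < 1 → eval τ z = 0) :
    z = 0 := by
  suffices h : ∀ n, ∀ τ : ℝ, |τ| < 1 → eval τ ((shiftLeft ^ n) z) = 0 by
    ext n
    rw [← coeff_zero_shiftLeft_pow, ← eval_zero]
    exact h n 0 (by simp)
  intro n
  induction n with
  | zero => exact hz
  | succ n ih =>
    have hne (τ : ℝ) (hτ : |τ| < 1) (hτ0 : τ ≠ 0) : eval τ ((shiftLeft ^ (n + 1)) z) = 0 := by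
      have h := eval_apply hτ ((shiftLeft ^ n) z)
      rw [ih τ hτ, ← eval_zero, ih 0 (by simp), zero_add, zero_eq_mul] at h
      rw [pow_succ']
      exact h.resolve_left hτ0
    intro τ hτ
    rcases eq_or_ne τ 0 with rfl | hτ0
    · have hcont : ContinuousAt (fun τ ↦ eval τ ((shiftLeft ^ (n + 1)) z)) 0 :=
        ((analyticAt_eval (by simp)).continuousAt).clm_apply continuousAt_const
      have : ∀ᶠ τ : ℝ in 𝓝[≠] 0, eval τ ((shiftLeft ^ (n + 1)) z) = 0 := by
        filter_upwards [self_mem_nhdsWithin,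
          nhdsWithin_le_nhds (Metric.ball_mem_nhds 0 one_pos)] with τ h0 h1
        exact hne τ (by simpa using h1) h0
      exact tendsto_nhds_unique (hcont.tendsto.mono_left nhdsWithin_le_nhds)
        (tendsto_const_nhds.congr' (this.mono fun _ h ↦ h.symm))
    · exact hne τ hτ hτ0

theorem eval_shiftRight_pow_apply (hτ : |τ| < 1) (n : ℕ) (z : BoundedSeq) :
    eval τ ((shiftRight ^ n) z) = τ ^ n * eval τ z := by
  induction n with
  | zero => simp
  | succ n ih =>
    rw [pow_succ', mul_apply_eq_comp, pow_succ', mul_assoc, ← ih]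
    exact DFunLike.congr_fun (eval_shiftRight hτ) _

/-- The operator `z ↦ ∑_{j < s} zⱼ τʲ`. -/
noncomputable def truncation (s : ℕ) : BoundedSeq →L[ℝ] BoundedSeq :=
  1 - shiftRight ^ s * shiftLeft ^ s

theorem eval_truncation (hτ : |τ| < 1) (s : ℕ) (z : BoundedSeq) :
    eval τ (truncation s z) = ∑ j ∈ Finset.range s, τ ^ j * coeff j z := by
  rw [truncation, sub_apply, one_apply_eq_self, map_sub, mul_apply_eq_comp,
    eval_shiftRight_pow_apply hτ, eval_eq_sum_add hτ z s, add_sub_cancel_right]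

theorem shiftLeft_pow_mul_shiftRight_pow (s : ℕ) : shiftLeft ^ s * shiftRight ^ s = 1 := by
  induction s with
  | zero => simp
  | succ s ih =>
    rw [pow_succ, pow_succ', mul_assoc, ← mul_assoc shiftLeft, shiftLeft_mul_shiftRight,
      one_mul, ih]

theorem eq_of_eval_eq {T U : BoundedSeq →L[ℝ] BoundedSeq}
    (h : ∀ τ : ℝ, |τ| < 1 → ∀ z, eval τ (T z) = eval τ (U z)) : T = U := by
  ext1 z
  refine sub_eq_zero.1 (eq_zero_of_eval_eq_zero fun τ hτ ↦ ?_)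
  rw [map_sub, h τ hτ, sub_self]

/-- `T` multiplies power series by `f`. -/
def IsMulBy (T : BoundedSeq →L[ℝ] BoundedSeq) (f : ℝ → ℝ) : Prop :=
  ∀ τ : ℝ, |τ| < 1 → ∀ z, eval τ (T z) = f τ * eval τ z

theorem isUnit_smul_shift_add_truncation {c : ℝ} (hc : c ≠ 0) (s : ℕ) :
    IsUnit (c • (shiftRight ^ s * shiftLeft ^ s) + truncation s) := by
  set p := shiftRight ^ s * shiftLeft ^ s with hp
  have hpp : p * p = p := by
    rw [hp, mul_assoc, ← mul_assoc (shiftLeft ^ s), shiftLeft_pow_mul_shiftRight_pow, one_mul]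
  have hinv (a b : ℝ) (hab : a * b = 1) :
      (a • p + truncation s) * (b • p + truncation s) = 1 := by
    simp only [truncation, ← hp, mul_add, add_mul, mul_sub, sub_mul, mul_one, one_mul]
    ext1 z
    have := congrArg (· z) hpp
    simp only [mul_apply_eq_comp] at this
    simp [smul_smul, this, mul_comm b a, hab]
  exact ⟨⟨_, _, hinv c c⁻¹ (mul_inv_cancel₀ hc), hinv c⁻¹ c (inv_mul_cancel₀ hc)⟩, rfl⟩

end BoundedSeq

section WeierstrassDivision

open BoundedSeq

variable {E : Type*} [NormedAddCommGroup E] [NormedSpace ℝ E]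

theorem exists_analyticAt_isMulBy {h : E × ℝ → ℝ} (hh : AnalyticAt ℝ h 0) :
    ∃ H : E × ℝ → (BoundedSeq →L[ℝ] BoundedSeq), AnalyticAt ℝ H 0 ∧
      ∀ᶠ y in 𝓝 0, IsMulBy (H y) fun τ ↦ h (y.1, τ * y.2) := by
  obtain ⟨H, hH, heq⟩ := exists_analyticAt_subst_snd hh norm_shiftRight_le
  refine ⟨H, hH, heq.mono fun y hy τ hτ z ↦ ?_⟩
  refine hy τ hτ.le (eval τ ∘L ContinuousLinearMap.apply ℝ BoundedSeq z) fun n ↦ ?_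
  exact eval_shiftRight_pow_apply hτ n z

theorem eventually_isUnit_mul_shiftLeft_pow_add_truncation {g e : ℝ → ℝ} {s : ℕ}
    (he : AnalyticAt ℝ e 0) (he0 : e 0 ≠ 0) (hge : ∀ᶠ t in 𝓝 0, g t = t ^ s * e t) :
    ∀ᶠ ρ in 𝓝[≠] (0 : ℝ), ∀ T, IsMulBy T (fun τ ↦ g (τ * ρ)) →
      IsUnit (T * shiftLeft ^ s + ρ ^ s • truncation s) := by
  obtain ⟨Q, hQ, hmul⟩ := exists_analyticAt_isMulBy (E := ℝ) (h := fun y ↦ e y.2)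
    (AnalyticAt.fun_comp (g := e) (f := Prod.snd) he analyticAt_snd)
  have hcont : ContinuousAt (fun ρ : ℝ ↦ Q (0, ρ)) 0 :=
    ContinuousAt.comp (g := Q) (f := fun ρ : ℝ ↦ ((0 : ℝ), ρ)) hQ.continuousAt (by fun_prop)
  have hQ0 : Q (0, 0) = e 0 • 1 := by
    refine eq_of_eval_eq fun τ hτ z ↦ ?_
    simpa [Prod.mk_zero_zero] using hmul.self_of_nhds τ hτ z
  have hunit : ∀ᶠ ρ in 𝓝 (0 : ℝ),
      IsUnit (shiftRight ^ s * Q (0, ρ) * shiftLeft ^ s + truncation s) := by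
    have : ContinuousAt (fun ρ ↦ shiftRight ^ s * Q (0, ρ) * shiftLeft ^ s + truncation s) 0 :=
      ((continuousAt_const.mul hcont).mul continuousAt_const).add continuousAt_const
    refine this.eventually (Units.isOpen.mem_nhds ?_)
    simpa [hQ0] using isUnit_smul_shift_add_truncation he0 s
  obtain ⟨r, hr, hge⟩ := Metric.eventually_nhds_iff.1 hge
  have hmul' : ∀ᶠ ρ in 𝓝 (0 : ℝ), IsMulBy (Q (0, ρ)) fun τ ↦ e (τ * ρ) :=
    (continuous_const.prodMk continuous_id).continuousAt.eventually
      (p := fun y : ℝ × ℝ ↦ IsMulBy (Q y) fun τ ↦ e (τ * y.2)) hmul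
  filter_upwards [nhdsWithin_le_nhds hunit, nhdsWithin_le_nhds hmul', self_mem_nhdsWithin,
    nhdsWithin_le_nhds (Metric.ball_mem_nhds 0 hr)] with ρ hρunit hρQ hρ0 hρr T hT
  have hTQ : T = ρ ^ s • (shiftRight ^ s * Q (0, ρ)) := by
    refine eq_of_eval_eq fun τ hτ z ↦ ?_
    have hτρ : dist (τ * ρ) 0 < r := by
      rw [dist_zero_right, norm_mul]
      exact (mul_le_of_le_one_left (norm_nonneg ρ) hτ.le).trans_lt (by simpa using hρr)
    rw [hT τ hτ]
    dsimp only
    rw [hge hτρ, smul_apply, map_smul, mul_apply_eq_comp, eval_shiftRight_pow_apply hτ, hρQ τ hτ,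
      smul_eq_mul]
    ring
  rw [hTQ, smul_mul_assoc, ← smul_add]
  exact hρunit.smul (Units.mk0 _ (pow_ne_zero s hρ0))

theorem exists_eventually_analyticAt_isMulBy {h : E × ℝ → ℝ} (hh : AnalyticAt ℝ h 0) :
    ∃ H : E × ℝ → (BoundedSeq →L[ℝ] BoundedSeq), ∀ᶠ ρ in 𝓝 (0 : ℝ), AnalyticAt ℝ H (0, ρ) ∧
      ∀ᶠ x in 𝓝 0, IsMulBy (H (x, ρ)) fun τ ↦ h (x, τ * ρ) := by
  obtain ⟨H, hH, hmul⟩ := exists_analyticAt_isMulBy hh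
  have hpair : Tendsto (fun ρ : ℝ ↦ ((0 : E), ρ)) (𝓝 0) (𝓝 0) :=
    (Continuous.prodMk_right 0).tendsto' 0 0 rfl
  have hcurry : ∀ᶠ ρ in 𝓝 (0 : ℝ), ∀ᶠ x in 𝓝 (0 : E),
      IsMulBy (H (x, ρ)) fun τ ↦ h (x, τ * ρ) :=
    (continuous_swap.tendsto ((0 : ℝ), (0 : E)) |>.eventually hmul).curry_nhds
  exact ⟨H, (hpair.eventually hH.eventually_analyticAt).and hcurry⟩

theorem analyticAt_clm_apply {F G : Type*} [NormedAddCommGroup F] [NormedSpace ℝ F]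
    [NormedAddCommGroup G] [NormedSpace ℝ G] {T : E → (F →L[ℝ] G)} {w : E → F} {x₀ : E}
    (hT : AnalyticAt ℝ T x₀) (hw : AnalyticAt ℝ w x₀) : AnalyticAt ℝ (fun x ↦ T x (w x)) x₀ :=
  ((ContinuousLinearMap.id ℝ (F →L[ℝ] G)).analyticAt_bilinear _).comp₂ hT hw

theorem exists_analyticAt_apply_eq {Z : Type*} [NormedAddCommGroup Z] [NormedSpace ℝ Z]
    [CompleteSpace Z] {T : E → (Z →L[ℝ] Z)} {w : E → Z} {x₀ : E} (hT : AnalyticAt ℝ T x₀)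
    (hw : AnalyticAt ℝ w x₀) (hunit : IsUnit (T x₀)) :
    ∃ z : E → Z, AnalyticAt ℝ z x₀ ∧ ∀ᶠ x in 𝓝 x₀, T x (z x) = w x := by
  have hinv : AnalyticAt ℝ (fun x ↦ Ring.inverse (T x)) x₀ :=
    AnalyticAt.comp (g := Ring.inverse) (analyticAt_inverse hunit.unit) hT
  refine ⟨fun x ↦ Ring.inverse (T x) (w x), analyticAt_clm_apply hinv hw, ?_⟩
  filter_upwards [hT.continuousAt.eventually (Units.isOpen.mem_nhds hunit)] with x hx
  rw [← mul_apply_eq_comp, Ring.mul_inverse_cancel _ hx, one_apply_eq_self]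

/- For small `ρ ≠ 0`, the operator `z ↦ g (x, τ ρ) q + ρˢ r`, where `z = τˢ q + r` and `r` has
degree less than `s`, is invertible at `x = 0`, because there `g (0, τ ρ) = ρˢ τˢ e (τ ρ)`. -/
theorem exists_division_on_disc {g h : E × ℝ → ℝ} {e : ℝ → ℝ} {s : ℕ} (hg : AnalyticAt ℝ g 0)
    (hh : AnalyticAt ℝ h 0) (he : AnalyticAt ℝ e 0) (he0 : e 0 ≠ 0)
    (hge : ∀ᶠ t in 𝓝 (0 : ℝ), g (0, t) = t ^ s * e t) :
    ∃ ρ ≠ (0 : ℝ), ∃ z : E → BoundedSeq, AnalyticAt ℝ z 0 ∧ ∀ᶠ x in 𝓝 0, ∀ τ : ℝ, |τ| < 1 →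
      h (x, τ * ρ) = g (x, τ * ρ) * eval τ ((shiftLeft ^ s) (z x)) +
        ρ ^ s * ∑ j ∈ Finset.range s, τ ^ j * coeff j (z x) := by
  obtain ⟨G, hG⟩ := exists_eventually_analyticAt_isMulBy hg
  obtain ⟨H, hH⟩ := exists_eventually_analyticAt_isMulBy hh
  have hunit := eventually_isUnit_mul_shiftLeft_pow_add_truncation he he0 hge
  obtain ⟨ρ, ⟨⟨⟨hGρ, hGmul⟩, hHρ, hHmul⟩, hunit⟩, hρ0⟩ :=
    ((((hG.and hH).filter_mono nhdsWithin_le_nhds).and hunit).and self_mem_nhdsWithin).exists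
  have hpair : AnalyticAt ℝ (fun x : E ↦ (x, ρ)) 0 := analyticAt_id.prod analyticAt_const
  obtain ⟨z, hz, hTz⟩ := exists_analyticAt_apply_eq
    (((AnalyticAt.comp (g := G) (f := fun x : E ↦ (x, ρ)) hGρ hpair).mul analyticAt_const).add
      analyticAt_const)
    (analyticAt_clm_apply (AnalyticAt.comp (g := H) (f := fun x : E ↦ (x, ρ)) hHρ hpair)
      (analyticAt_const (v := unit)))
    (hunit _ hGmul.self_of_nhds)
  refine ⟨ρ, hρ0, z, hz, ?_⟩
  filter_upwards [hTz, hGmul, hHmul] with x hTz hG hH τ hτ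
  have hHτ := hH τ hτ unit
  rw [eval_unit hτ, mul_one] at hHτ
  have heval := congrArg (eval τ) hTz
  simp only [Pi.add_apply, Pi.mul_apply, Function.comp_apply, add_apply, mul_apply_eq_comp,
    smul_apply, map_add, map_smul, hHτ, hG τ hτ _, eval_truncation hτ, smul_eq_mul] at heval
  exact heval.symm

/-- The number `s` is the order of vanishing of `g (0, ·)` at `0`. -/
theorem exists_weierstrass_division {g : E × ℝ → ℝ} (hg : AnalyticAt ℝ g 0)
    (hg0 : ¬∀ᶠ t in 𝓝 (0 : ℝ), g (0, t) = 0) :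
    ∃ s : ℕ, ∀ h : E × ℝ → ℝ, AnalyticAt ℝ h 0 → ∃ (q : E × ℝ → ℝ) (r : ℕ → E → ℝ),
      AnalyticAt ℝ q 0 ∧ (∀ j, AnalyticAt ℝ (r j) 0) ∧
        ∀ᶠ y in 𝓝 0, h y = g y * q y + ∑ j ∈ Finset.range s, r j y.1 * y.2 ^ j := by
  have hslice : AnalyticAt ℝ (fun t : ℝ ↦ g (0, t)) 0 :=
    AnalyticAt.comp (g := g) hg (analyticAt_const.prod analyticAt_id)
  obtain ⟨s, e, he, he0, hge⟩ := hslice.exists_eventuallyEq_pow_smul_nonzero_iff.2 hg0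
  simp only [sub_zero, smul_eq_mul] at hge
  refine ⟨s, fun h hh ↦ ?_⟩
  obtain ⟨ρ, hρ, z, hz, hdiv⟩ := exists_division_on_disc hg hh he he0 hge
  have heval : AnalyticAt ℝ (fun y : E × ℝ ↦ eval (y.2 / ρ)) 0 :=
    AnalyticAt.comp (g := eval) (f := fun y : E × ℝ ↦ y.2 / ρ) (analyticAt_eval (by simp))
      analyticAt_snd.div_const
  refine ⟨fun y ↦ eval (y.2 / ρ) ((shiftLeft ^ s) (z y.1)),
    fun j x ↦ ρ ^ s * ρ⁻¹ ^ j * coeff j (z x),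
    analyticAt_clm_apply heval ?_, fun j ↦ ?_, ?_⟩
  · exact ((shiftLeft ^ s).analyticAt _).comp
      (AnalyticAt.comp (g := z) (f := Prod.fst) (x := (0 : E × ℝ)) hz analyticAt_fst)
  · exact analyticAt_const.mul (((coeff j).analyticAt _).comp hz)
  have hsmall : ∀ᶠ y : E × ℝ in 𝓝 0, |y.2 / ρ| < 1 := by
    have : ContinuousAt (fun y : E × ℝ ↦ |y.2 / ρ|) 0 := by fun_prop
    exact this.eventually_lt_const (by simp)
  filter_upwards [continuous_fst.tendsto (0 : E × ℝ) |>.eventually hdiv, hsmall] with y hy hτ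
  have hdivy := hy _ hτ
  rw [div_mul_cancel₀ _ hρ] at hdivy
  rw [hdivy, Finset.mul_sum]
  congr 1
  refine Finset.sum_congr rfl fun j _ ↦ ?_
  rw [div_eq_mul_inv, mul_pow]
  ring

end WeierstrassDivision

/-! ### Germs of analytic functions -/

theorem exists_continuousLinearEquiv_prod {E : Type*} [NormedAddCommGroup E]
    [NormedSpace ℝ E] {v : E} (hv : v ≠ 0) :
    ∃ (E' : Submodule ℝ E) (e : E ≃L[ℝ] E' × ℝ), e.symm (0, 1) = v := by
  obtain ⟨ℓ, hℓ⟩ := SeparatingDual.exists_eq_one (R := ℝ) hv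
  have hright : Function.RightInverse (ContinuousLinearMap.toSpanSingleton ℝ v) ℓ := fun t ↦ by
    simp [hℓ]
  refine ⟨ℓ.ker, (ContinuousLinearEquiv.equivOfRightInverse ℓ _ hright).trans
    (.prodComm ℝ ℝ ℓ.ker), ?_⟩
  simp

/-- The ring of germs at `0` of real analytic functions on `E`, inside all germs of functions. -/
def analyticGermSubring (E : Type u) [NormedAddCommGroup E] [NormedSpace ℝ E] :
    Subring ((𝓝 (0 : E)).Germ ℝ) where
  carrier := {φ | ∃ h : E → ℝ, AnalyticAt ℝ h 0 ∧ (h : (𝓝 (0 : E)).Germ ℝ) = φ}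
  mul_mem' := by
    rintro _ _ ⟨g, hg, rfl⟩ ⟨h, hh, rfl⟩
    exact ⟨_, hg.mul hh, rfl⟩
  one_mem' := ⟨_, analyticAt_const, rfl⟩
  add_mem' := by
    rintro _ _ ⟨g, hg, rfl⟩ ⟨h, hh, rfl⟩
    exact ⟨_, hg.add hh, rfl⟩
  zero_mem' := ⟨_, analyticAt_const, rfl⟩
  neg_mem' := by
    rintro _ ⟨g, hg, rfl⟩
    exact ⟨_, hg.neg, rfl⟩

/-- Germs at `0` of real analytic functions on `E`. -/
def AnalyticGerm (E : Type u) [NormedAddCommGroup E] [NormedSpace ℝ E] : Type u :=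
  analyticGermSubring E

namespace AnalyticGerm

variable {E F : Type*} [NormedAddCommGroup E] [NormedSpace ℝ E] [NormedAddCommGroup F]
  [NormedSpace ℝ F] {g h : E → ℝ}

noncomputable instance : CommRing (AnalyticGerm E) :=
  inferInstanceAs (CommRing (analyticGermSubring E))

/-- The germ of an analytic function. -/
def mk (h : E → ℝ) (hh : AnalyticAt ℝ h 0) : AnalyticGerm E := ⟨h, h, hh, rfl⟩

theorem mk_eq_mk {hg : AnalyticAt ℝ g 0} {hh : AnalyticAt ℝ h 0} :
    mk g hg = mk h hh ↔ g =ᶠ[𝓝 0] h := Subtype.ext_iff.trans Germ.coe_eq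

theorem mk_eq_zero {hh : AnalyticAt ℝ h 0} : mk h hh = 0 ↔ ∀ᶠ x in 𝓝 0, h x = 0 :=
  mk_eq_mk (hh := analyticAt_const)

theorem mk_add (hg : AnalyticAt ℝ g 0) (hh : AnalyticAt ℝ h 0) :
    mk (g + h) (hg.add hh) = mk g hg + mk h hh := rfl

theorem mk_mul (hg : AnalyticAt ℝ g 0) (hh : AnalyticAt ℝ h 0) :
    mk (g * h) (hg.mul hh) = mk g hg * mk h hh := rfl

theorem mk_pow (hh : AnalyticAt ℝ h 0) (n : ℕ) : mk (h ^ n) (hh.pow n) = mk h hh ^ n := rfl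

theorem mk_sum {ι : Type*} (s : Finset ι) {h : ι → E → ℝ} (hh : ∀ i, AnalyticAt ℝ (h i) 0) :
    mk (∑ i ∈ s, h i) (s.analyticAt_sum fun i _ ↦ hh i) = ∑ i ∈ s, mk (h i) (hh i) := by
  classical
  induction s using Finset.induction_on with
  | empty => rfl
  | insert i s hi ih =>
    simp only [Finset.sum_insert hi, ← ih]
    rfl

theorem isUnit_mk {h : E → ℝ} (hh : AnalyticAt ℝ h 0) (h0 : h 0 ≠ 0) : IsUnit (mk h hh) := by
  refine .of_mul_eq_one (mk h⁻¹ (hh.inv h0)) ?_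
  rw [← mk_mul]
  refine (mk_eq_mk (hh := analyticAt_const)).2 ?_
  filter_upwards [hh.continuousAt.eventually_ne h0] with x hx
  exact mul_inv_cancel₀ hx

theorem exists_rep (φ : AnalyticGerm E) : ∃ (h : E → ℝ) (hh : AnalyticAt ℝ h 0), mk h hh = φ :=
  let ⟨h, hh, hφ⟩ := φ.2
  ⟨h, hh, Subtype.ext hφ⟩

/-- A function representing a germ. -/
noncomputable def rep (φ : AnalyticGerm E) : E → ℝ := φ.exists_rep.choose

theorem analyticAt_rep (φ : AnalyticGerm E) : AnalyticAt ℝ φ.rep 0 :=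
  φ.exists_rep.choose_spec.choose

theorem mk_rep (φ : AnalyticGerm E) : mk φ.rep φ.analyticAt_rep = φ :=
  φ.exists_rep.choose_spec.choose_spec

theorem rep_mk (hh : AnalyticAt ℝ h 0) : (mk h hh).rep =ᶠ[𝓝 0] h := mk_eq_mk.1 (mk_rep _)

theorem rep_add (φ ψ : AnalyticGerm E) : (φ + ψ).rep =ᶠ[𝓝 0] φ.rep + ψ.rep := by
  conv_lhs => rw [← mk_rep φ, ← mk_rep ψ, ← mk_add]
  exact rep_mk _

theorem rep_mul (φ ψ : AnalyticGerm E) : (φ * ψ).rep =ᶠ[𝓝 0] φ.rep * ψ.rep := by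
  conv_lhs => rw [← mk_rep φ, ← mk_rep ψ, ← mk_mul]
  exact rep_mk _

theorem rep_zero : (0 : AnalyticGerm E).rep =ᶠ[𝓝 0] 0 := rep_mk analyticAt_const

theorem rep_one : (1 : AnalyticGerm E).rep =ᶠ[𝓝 0] 1 := rep_mk analyticAt_const

/-- The value of a germ at `0`. -/
noncomputable def value : AnalyticGerm E →+* ℝ where
  toFun φ := φ.rep 0
  map_one' := rep_one.self_of_nhds
  map_mul' φ ψ := (rep_mul φ ψ).self_of_nhds
  map_zero' := rep_zero.self_of_nhds
  map_add' φ ψ := (rep_add φ ψ).self_of_nhds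

instance : CharZero (AnalyticGerm E) := value.charZero

instance : IsDomain (AnalyticGerm E) := by
  have : Nontrivial (AnalyticGerm E) := value.domain_nontrivial
  have : NoZeroDivisors (AnalyticGerm E) := by
    refine ⟨fun {φ ψ} hφψ ↦ ?_⟩
    obtain ⟨f, hf, rfl⟩ := φ.exists_rep
    obtain ⟨g, hg, rfl⟩ := ψ.exists_rep
    rw [← mk_mul, mk_eq_zero] at hφψ
    obtain ⟨r, hr, hball⟩ := Metric.eventually_nhds_iff_ball.1
      ((hf.eventually_analyticAt.and hg.eventually_analyticAt).and hφψ)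
    have hr0 : Metric.ball (0 : E) r ∈ 𝓝 0 := Metric.ball_mem_nhds 0 hr
    refine or_iff_not_imp_left.2 fun hf0 ↦ mk_eq_zero.2 ?_
    rw [mk_eq_zero, not_eventually] at hf0
    obtain ⟨x, hfx, hx⟩ := (hf0.and_eventually hr0).exists
    have hgx : g =ᶠ[𝓝 x] 0 := by
      filter_upwards [(hball x hx).1.1.continuousAt.eventually_ne hfx,
        Metric.isOpen_ball.mem_nhds hx] with y hfy hy
      exact (mul_eq_zero.1 (hball y hy).2).resolve_left hfy
    have hg_on : AnalyticOnNhd ℝ g (Metric.ball 0 r) := fun y hy ↦ (hball y hy).1.2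
    exact eventually_of_mem hr0 (hg_on.eqOn_zero_of_preconnected_of_eventuallyEq_zero
      (convex_ball (0 : E) r).isPreconnected hx hgx)
  exact NoZeroDivisors.to_isDomain _

theorem analyticAt_fderiv_apply (hh : AnalyticAt ℝ h 0) (v : E) :
    AnalyticAt ℝ (fun x ↦ fderiv ℝ h x v) 0 :=
  analyticAt_clm_apply hh.fderiv analyticAt_const

theorem mk_rep_fderiv (hh : AnalyticAt ℝ h 0) (v : E) :
    mk (fun x ↦ fderiv ℝ (mk h hh).rep x v) (analyticAt_fderiv_apply (analyticAt_rep _) v) =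
      mk (fun x ↦ fderiv ℝ h x v) (analyticAt_fderiv_apply hh v) := by
  refine mk_eq_mk.2 ?_
  filter_upwards [(rep_mk hh).eventuallyEq_nhds] with x hx
  rw [hx.fderiv_eq]

/-- The derivative of germs in the direction `v`. -/
noncomputable def dirDeriv (v : E) : Derivation ℤ (AnalyticGerm E) (AnalyticGerm E) :=
  Derivation.mk'
    (AddMonoidHom.toIntLinearMap <| AddMonoidHom.mk'
      (fun φ ↦ mk (fun x ↦ fderiv ℝ φ.rep x v) (analyticAt_fderiv_apply φ.analyticAt_rep v))
      fun φ ψ ↦ by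
        obtain ⟨f, hf, rfl⟩ := φ.exists_rep
        obtain ⟨g, hg, rfl⟩ := ψ.exists_rep
        rw [← mk_add, mk_rep_fderiv, mk_rep_fderiv, mk_rep_fderiv, ← mk_add, mk_eq_mk]
        filter_upwards [hf.eventually_analyticAt, hg.eventually_analyticAt] with x hfx hgx
        rw [fderiv_add hfx.differentiableAt hgx.differentiableAt]
        rfl)
    fun φ ψ ↦ by
      obtain ⟨f, hf, rfl⟩ := φ.exists_rep
      obtain ⟨g, hg, rfl⟩ := ψ.exists_rep
      simp only [AddMonoidHom.coe_toIntLinearMap, AddMonoidHom.mk'_apply, smul_eq_mul]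
      rw [← mk_mul, mk_rep_fderiv, mk_rep_fderiv, mk_rep_fderiv, ← mk_mul, ← mk_mul, ← mk_add,
        mk_eq_mk]
      filter_upwards [hf.eventually_analyticAt, hg.eventually_analyticAt] with x hfx hgx
      rw [fderiv_mul hfx.differentiableAt hgx.differentiableAt]
      rfl

theorem dirDeriv_mk (v : E) (hh : AnalyticAt ℝ h 0) :
    dirDeriv v (mk h hh) = mk (fun x ↦ fderiv ℝ h x v) (analyticAt_fderiv_apply hh v) :=
  mk_rep_fderiv hh v

theorem dirDeriv_zero (h : AnalyticGerm E) : dirDeriv 0 h = 0 := by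
  obtain ⟨h, hh, rfl⟩ := h.exists_rep
  simp only [dirDeriv_mk, map_zero]
  rfl

theorem analyticAt_comp_clm {h : F → ℝ} (hh : AnalyticAt ℝ h 0) (L : E →L[ℝ] F) :
    AnalyticAt ℝ (fun x ↦ h (L x)) 0 :=
  hh.comp_of_eq (L.analyticAt 0) (map_zero L)

theorem eventually_comp_clm {p : F → Prop} (hp : ∀ᶠ y in 𝓝 0, p y) (L : E →L[ℝ] F) :
    ∀ᶠ x in 𝓝 0, p (L x) :=
  (L.continuous.tendsto' 0 0 (map_zero L)).eventually hp

/-- Composition of germs with a continuous linear map. -/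
noncomputable def comap (L : E →L[ℝ] F) : AnalyticGerm F →+* AnalyticGerm E where
  toFun φ := mk (fun x ↦ φ.rep (L x)) (analyticAt_comp_clm φ.analyticAt_rep L)
  map_one' := (mk_eq_mk (hh := analyticAt_const)).2 (eventually_comp_clm rep_one L)
  map_mul' φ ψ := by
    rw [← mk_mul, mk_eq_mk]
    exact eventually_comp_clm (rep_mul φ ψ) L
  map_zero' := mk_eq_zero.2 (eventually_comp_clm rep_zero L)
  map_add' φ ψ := by
    rw [← mk_add, mk_eq_mk]
    exact eventually_comp_clm (rep_add φ ψ) L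

theorem comap_mk (L : E →L[ℝ] F) {h : F → ℝ} (hh : AnalyticAt ℝ h 0) :
    comap L (mk h hh) = mk (fun x ↦ h (L x)) (analyticAt_comp_clm hh L) :=
  (mk_eq_mk (hg := analyticAt_comp_clm (analyticAt_rep _) L)).2
    (eventually_comp_clm (rep_mk hh) L)

theorem dirDeriv_comap (L : E →L[ℝ] F) (v : E) (φ : AnalyticGerm F) :
    dirDeriv v (comap L φ) = comap L (dirDeriv (L v) φ) := by
  obtain ⟨h, hh, rfl⟩ := φ.exists_rep
  rw [comap_mk, dirDeriv_mk, dirDeriv_mk, comap_mk, mk_eq_mk]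
  filter_upwards [eventually_comp_clm hh.eventually_analyticAt L] with x hx
  rw [← Function.comp_def, fderiv_comp x hx.differentiableAt L.differentiableAt, L.fderiv]
  rfl

theorem comap_comp {G : Type*} [NormedAddCommGroup G] [NormedSpace ℝ G] (L : E →L[ℝ] F)
    (M : F →L[ℝ] G) (φ : AnalyticGerm G) : comap L (comap M φ) = comap (M.comp L) φ := by
  obtain ⟨h, hh, rfl⟩ := φ.exists_rep
  rw [comap_mk, comap_mk, comap_mk]
  rfl

theorem comap_id (φ : AnalyticGerm E) : comap (.id ℝ E) φ = φ := by
  obtain ⟨h, hh, rfl⟩ := φ.exists_rep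
  rw [comap_mk]
  rfl

theorem exists_comap_toSpanSingleton_ne_zero {φ : AnalyticGerm E} (hφ : φ ≠ 0) :
    ∃ v : E, comap (.toSpanSingleton ℝ v) φ ≠ 0 := by
  obtain ⟨h, hh, rfl⟩ := φ.exists_rep
  by_contra! hzero
  obtain ⟨r, hr, hball⟩ := Metric.eventually_nhds_iff_ball.1 hh.eventually_analyticAt
  refine hφ (mk_eq_zero.2 (eventually_of_mem (Metric.ball_mem_nhds 0 hr) fun v hv ↦ ?_))
  have hline : AnalyticOnNhd ℝ (fun t : ℝ ↦ h (t • v)) (Set.Icc 0 1) := by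
    intro t ht
    have htv : t • v ∈ Metric.ball 0 r := by
      rw [mem_ball_zero_iff] at hv ⊢
      refine (norm_smul_le t v).trans_lt ?_
      rw [norm_eq_abs, abs_of_nonneg ht.1]
      exact (mul_le_of_le_one_left (norm_nonneg v) ht.2).trans_lt hv
    exact AnalyticAt.fun_comp (f := fun t : ℝ ↦ t • v) (hball _ htv)
      (analyticAt_id.fun_smul analyticAt_const)
  have hzero_near : ∀ᶠ t : ℝ in 𝓝 0, h (t • v) = 0 := by
    simpa only [comap_mk, mk_eq_zero, ContinuousLinearMap.toSpanSingleton_apply] using hzero v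
  simpa using hline.eqOn_zero_of_preconnected_of_eventuallyEq_zero isPreconnected_Icc
    (Set.left_mem_Icc.2 zero_le_one) hzero_near (Set.right_mem_Icc.2 zero_le_one)

theorem isUnit_of_comap_toSpanSingleton_zero_ne_zero {g : AnalyticGerm E}
    (hg : comap (.toSpanSingleton ℝ (0 : E)) g ≠ 0) : IsUnit g := by
  obtain ⟨h, hh, rfl⟩ := g.exists_rep
  refine isUnit_mk hh fun h0 ↦ hg ?_
  rw [comap_mk, mk_eq_zero]
  exact .of_forall fun t ↦ by simpa using h0

/-- The germ of the coordinate function `(x, t) ↦ t`. -/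
noncomputable def lastCoord (E : Type*) [NormedAddCommGroup E] [NormedSpace ℝ E] :
    AnalyticGerm (E × ℝ) :=
  mk Prod.snd analyticAt_snd

theorem dirDeriv_lastCoord (v : E × ℝ) :
    dirDeriv v (lastCoord E) = mk (fun _ ↦ v.2) analyticAt_const := by
  rw [lastCoord, dirDeriv_mk, mk_eq_mk]
  refine .of_forall fun x ↦ ?_
  change fderiv ℝ Prod.snd x v = v.2
  rw [fderiv_snd]
  rfl

theorem exists_division {g : AnalyticGerm (E × ℝ)} (hg : comap (.inr ℝ E ℝ) g ≠ 0) :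
    ∃ s : ℕ, ∀ h : AnalyticGerm (E × ℝ), ∃ (q : AnalyticGerm (E × ℝ)) (r : ℕ → AnalyticGerm E),
      h = g * q + ∑ j ∈ Finset.range s, comap (.fst ℝ E ℝ) (r j) * lastCoord E ^ j := by
  obtain ⟨g, hg_an, rfl⟩ := g.exists_rep
  rw [comap_mk, Ne, mk_eq_zero] at hg
  obtain ⟨s, hs⟩ := exists_weierstrass_division hg_an hg
  refine ⟨s, fun h ↦ ?_⟩
  obtain ⟨h, hh, rfl⟩ := h.exists_rep
  obtain ⟨q, r, hq, hr, hdiv⟩ := hs h hh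
  refine ⟨mk q hq, fun j ↦ mk (r j) (hr j), ?_⟩
  simp only [comap_mk, lastCoord, ← mk_pow, ← mk_mul]
  rw [← mk_sum, ← mk_add, mk_eq_mk]
  filter_upwards [hdiv] with y hy
  simpa using hy

/-! ### Polynomial approximation of germs -/

section Approximation

variable {V : Type v} [CommRing V] {ι κ : Type*}

/-- The germs `h` for which some polynomial `G` over `k` satisfies `φ h ≡ G(z)` and
`φ (∂_{u i} h) ≡ (∂G/∂Xᵢ)(z)` modulo `I`. -/
noncomputable def approximable (k : Type*) [Field k] [Algebra k V] (I : Ideal V)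
    (φ : AnalyticGerm E →+* V) (z : ι → V) (u : ι → E) : Subring (AnalyticGerm E) where
  carrier := {h | ∃ G : MvPolynomial ι k,
    Ideal.Quotient.mk I (φ h) = Ideal.Quotient.mk I (MvPolynomial.aeval z G) ∧
      ∀ i, Ideal.Quotient.mk I (φ (dirDeriv (u i) h)) =
        Ideal.Quotient.mk I (MvPolynomial.aeval z (MvPolynomial.pderiv i G))}
  zero_mem' := ⟨0, by simp⟩
  one_mem' := ⟨1, by simp⟩
  add_mem' := by
    rintro g h ⟨P, hP, hP'⟩ ⟨Q, hQ, hQ'⟩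
    exact ⟨P + Q, by simp [hP, hQ], fun i ↦ by simp [hP', hQ']⟩
  mul_mem' := by
    rintro g h ⟨P, hP, hP'⟩ ⟨Q, hQ, hQ'⟩
    exact ⟨P * Q, by simp [hP, hQ], fun i ↦ by simp [hP, hP', hQ, hQ', Derivation.leibniz]⟩
  neg_mem' := by
    rintro h ⟨P, hP, hpderiv⟩
    exact ⟨-P, by simp [hP], fun i ↦ by simp [hpderiv]⟩

/-- Every germ is approximable, for a suitable finite set of variables over a suitable field. -/
def IsPolynomiallyApproximable (I : Ideal V) (φ : AnalyticGerm E →+* V) : Prop :=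
  ∃ (k : Type v) (_ : Field k) (_ : Algebra k V) (ι : Type) (_ : Finite ι) (z : ι → V) (u : ι → E),
    approximable k I φ z u = ⊤

variable {k : Type*} [Field k] [Algebra k V] {I : Ideal V} {φ : AnalyticGerm E →+* V}

theorem comap_mem_approximable (L : E →L[ℝ] F) {z : κ → V} {u : ι → F} {w : κ → E} {σ : ι → κ}
    (hσ : σ.Injective) (hw : ∀ i, L (w (σ i)) = u i) (hw0 : ∀ j ∉ Set.range σ, L (w j) = 0)
    {h : AnalyticGerm F} (hh : h ∈ approximable k I (φ.comp (comap L)) (z ∘ σ) u) :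
    comap L h ∈ approximable k I φ z w := by
  obtain ⟨G, hG, hG'⟩ := hh
  refine ⟨MvPolynomial.rename σ G, by rwa [MvPolynomial.aeval_rename], fun j ↦ ?_⟩
  rw [dirDeriv_comap]
  by_cases hj : j ∈ Set.range σ
  · obtain ⟨i, rfl⟩ := hj
    rw [hw, MvPolynomial.pderiv_rename hσ, MvPolynomial.aeval_rename]
    exact hG' i
  · classical
    have hj_vars : j ∉ (MvPolynomial.rename σ G).vars := fun hmem ↦
      have ⟨i, _, hi⟩ := Finset.mem_image.1 (MvPolynomial.vars_rename σ G hmem)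
      hj ⟨i, hi⟩
    simp [hw0 j hj, dirDeriv_zero, MvPolynomial.pderiv_eq_zero_of_notMem_vars hj_vars]

theorem pow_succ_mul_mem_approximable {g : AnalyticGerm E} {M : ℕ} (hg : φ g ^ M ∈ I)
    (q : AnalyticGerm E) (z : ι → V) (u : ι → E) :
    g ^ (M + 1) * q ∈ approximable k I φ z u := by
  have hg' : Ideal.Quotient.mk I (φ g) ^ M = 0 := by
    rwa [← map_pow, Ideal.Quotient.eq_zero_iff_mem]
  have hg'' : Ideal.Quotient.mk I (φ g) ^ (M + 1) = 0 := by rw [pow_succ, hg', zero_mul]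
  exact ⟨0, by simp [hg''], fun i ↦ by simp [hg', hg'', Derivation.leibniz_pow]⟩

theorem isPolynomiallyApproximable_of_isUnit [IsDomain V] (I : Ideal V)
    (hφ : ∀ g, φ g ≠ 0 → IsUnit (φ g)) : IsPolynomiallyApproximable I φ := by
  have hunit (y : nonZeroDivisors φ.range) : IsUnit (φ.range.subtype y) := by
    obtain ⟨⟨_, g, rfl⟩, hy⟩ := y
    exact hφ g fun h0 ↦ nonZeroDivisors.ne_zero hy (Subtype.ext h0)
  let _ : Algebra (FractionRing φ.range) V := (IsLocalization.lift hunit).toAlgebra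
  refine ⟨FractionRing φ.range, inferInstance, inferInstance, Empty, inferInstance, Empty.elim,
    Empty.elim, (Subring.eq_top_iff' _).2 fun h ↦
      ⟨.C (algebraMap φ.range _ (φ.rangeRestrict h)), ?_, nofun⟩⟩
  rw [MvPolynomial.aeval_C, RingHom.algebraMap_toAlgebra, IsLocalization.lift_eq]
  rfl

theorem isPolynomiallyApproximable_prod {φ : AnalyticGerm (E × ℝ) →+* V} {g : AnalyticGerm (E × ℝ)}
    {M : ℕ} (hg : comap (.inr ℝ E ℝ) g ≠ 0) (hgI : φ g ^ M ∈ I)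
    (hφ : IsPolynomiallyApproximable I (φ.comp (comap (.fst ℝ E ℝ)))) :
    IsPolynomiallyApproximable I φ := by
  obtain ⟨k, _, _, ι, _, z, u, htop⟩ := hφ
  let y (j : Option ι) : V := j.elim (φ (lastCoord E)) z
  let w (j : Option ι) : E × ℝ := j.elim (0, 1) fun i ↦ (u i, 0)
  refine ⟨k, _, inferInstance, Option ι, inferInstance, y, w,
    (Subring.eq_top_iff' _).2 fun h ↦ ?_⟩
  have hg_pow : comap (.inr ℝ E ℝ) (g ^ (M + 1)) ≠ 0 := by
    rw [map_pow]
    exact pow_ne_zero _ hg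
  obtain ⟨s, hs⟩ := exists_division hg_pow
  obtain ⟨q, r, rfl⟩ := hs h
  have hlast : lastCoord E ∈ approximable k I φ y w := by
    refine ⟨.X none, by simp [y], fun j ↦ ?_⟩
    cases j with
    | none =>
      have : dirDeriv (0, 1) (lastCoord E) = 1 := dirDeriv_lastCoord _
      simp [w, this]
    | some i =>
      have : dirDeriv (u i, 0) (lastCoord E) = 0 := dirDeriv_lastCoord _
      simp [w, this]
  have hcomap (r : AnalyticGerm E) : comap (.fst ℝ E ℝ) r ∈ approximable k I φ y w := by
    refine comap_mem_approximable (u := u) _ (Option.some_injective _) (fun i ↦ rfl) ?_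
      (htop ▸ Subring.mem_top r)
    rintro (_ | i) hi
    · rfl
    · exact absurd ⟨i, rfl⟩ hi
  exact add_mem (pow_succ_mul_mem_approximable hgI q y w)
    (sum_mem fun j _ ↦ mul_mem (hcomap _) (pow_mem hlast j))

theorem isPolynomiallyApproximable_of_comp_comap (e : E ≃L[ℝ] F)
    (hφ : IsPolynomiallyApproximable I (φ.comp (comap (e : E →L[ℝ] F)))) :
    IsPolynomiallyApproximable I φ := by
  obtain ⟨k, _, _, ι, _, z, u, htop⟩ := hφ
  refine ⟨k, _, inferInstance, ι, inferInstance, z, e.symm ∘ u,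
    (Subring.eq_top_iff' _).2 fun h ↦ ?_⟩
  have hh : comap (e : E →L[ℝ] F) (comap (e.symm : F →L[ℝ] E) h) = h := by
    rw [comap_comp, e.coe_symm_comp_coe, comap_id]
  rw [← hh]
  exact comap_mem_approximable (σ := id) (u := u) _ Function.injective_id (by simp) (by simp)
    (htop ▸ Subring.mem_top _)

theorem isPolynomiallyApproximable_of_exists_pow_mem [IsDomain V]
    (hI : ∀ y : V, ¬IsUnit y → ∃ n, y ^ n ∈ I) {E : Type u} [NormedAddCommGroup E]
    [NormedSpace ℝ E] [FiniteDimensional ℝ E] (φ : AnalyticGerm E →+* V) :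
    IsPolynomiallyApproximable I φ := by
  induction hn : Module.finrank ℝ E using Nat.strong_induction_on generalizing E with | _ n ih
  by_cases hφ : ∀ g, φ g ≠ 0 → IsUnit (φ g)
  · exact isPolynomiallyApproximable_of_isUnit I hφ
  push Not at hφ
  obtain ⟨g, hg0, hg⟩ := hφ
  obtain ⟨M, hM⟩ := hI _ hg
  obtain ⟨v, hv⟩ := exists_comap_toSpanSingleton_ne_zero (ne_zero_of_map hg0)
  have hv0 : v ≠ 0 := by
    rintro rfl
    exact hg ((isUnit_of_comap_toSpanSingleton_zero_ne_zero hv).map φ)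
  obtain ⟨E', e, he⟩ := exists_continuousLinearEquiv_prod hv0
  have hfinrank : Module.finrank ℝ E' < n := by
    rw [← hn, e.finrank_eq, Module.finrank_prod, Module.finrank_self]
    exact Nat.lt_succ_self _
  refine isPolynomiallyApproximable_of_comp_comap e (isPolynomiallyApproximable_prod
    (g := comap e.symm g) (M := M) ?_ ?_ (ih _ hfinrank _ rfl))
  · have hline : (e.symm : E' × ℝ →L[ℝ] E).comp (.inr ℝ E' ℝ) = .toSpanSingleton ℝ v :=
      ContinuousLinearMap.ext_ring (by simpa using he)
    rwa [comap_comp, hline]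
  · have hcomp : comap (e : E →L[ℝ] E' × ℝ) (comap e.symm g) = g := by
      rw [comap_comp, e.coe_symm_comp_coe, comap_id]
    rwa [RingHom.comp_apply, hcomp]

end Approximation

/-! ### The gradient inequality -/

theorem isUnit_map_of_dvd_dirDeriv [FiniteDimensional ℝ E] {V : Type*} [CommRing V] [IsDomain V]
    [IsLocalRing V] [CharZero V] {φ : AnalyticGerm E →+* V} {f : AnalyticGerm E} (hf : φ f ≠ 0)
    (hV : ∀ y : V, ¬IsUnit y → ∃ n, φ f ∣ y ^ n) (hdvd : ∀ v, φ f ∣ φ (dirDeriv v f)) :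
    IsUnit (φ f) := by
  by_contra hunit
  have hI (y : V) (hy : ¬IsUnit y) : ∃ n, y ^ n ∈ Ideal.span {φ f ^ 2} := by
    obtain ⟨n, hn⟩ := hV y hy
    exact ⟨n * 2, Ideal.mem_span_singleton.2 (pow_mul y n 2 ▸ pow_dvd_pow_of_dvd hn 2)⟩
  obtain ⟨k, _, _, ι, _, z, u, htop⟩ := isPolynomiallyApproximable_of_exists_pow_mem hI φ
  obtain ⟨G, hG, hG'⟩ : f ∈ approximable k (Ideal.span {φ f ^ 2}) φ z u := htop ▸ Subring.mem_top f
  simp only [Ideal.Quotient.mk_eq_mk_iff_sub_mem, Ideal.mem_span_singleton] at hG hG'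
  obtain ⟨c, hc⟩ := hG
  have hassoc : Associated (φ f) (MvPolynomial.aeval z G) := by
    have hunit_c : IsUnit (1 - φ f * c) := by
      by_contra hc'
      exact IsLocalRing.nonunits_add hc' (fun h ↦ hunit (isUnit_of_mul_isUnit_left h))
        (by simp : IsUnit (1 - φ f * c + φ f * c))
    refine ⟨hunit_c.unit, ?_⟩
    rw [IsUnit.unit_spec]
    linear_combination hc
  have hdvd_pderiv (j : ι) :
      MvPolynomial.aeval z G ∣ MvPolynomial.aeval z (MvPolynomial.pderiv j G) :=
    hassoc.symm.dvd.trans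
      ((dvd_sub_right (hdvd (u j))).1 ((dvd_pow_self _ two_ne_zero).trans (hG' j)))
  have : CharZero k := (algebraMap k V).charZero
  exact hunit (hassoc.isUnit_iff.2
    (isUnit_aeval_of_dvd_pderiv ((hassoc.ne_zero_iff).1 hf) hdvd_pderiv))

theorem exists_pow_mem_span_dirDeriv_pow [FiniteDimensional ℝ E] (f : AnalyticGerm E) :
    ∃ n, f ^ n ∈ Ideal.span (insert f (Set.range fun v ↦ dirDeriv v f)) ^ (n + 1) := by
  obtain rfl | hf := eq_or_ne f 0
  · exact ⟨1, by simp⟩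
  let B := blowupChart f (Set.range fun v ↦ dirDeriv v f) (FractionRing (AnalyticGerm E))
  refine exists_pow_mem_span_pow_of_isUnit (K := FractionRing (AnalyticGerm E)) hf ?_
  by_contra hunit
  obtain ⟨p, _, hfp, hpow⟩ := exists_dvd_pow_localization_of_not_isUnit hunit
  let φ : AnalyticGerm E →+* Localization.AtPrime p :=
    (algebraMap B (Localization.AtPrime p)).comp (algebraMap (AnalyticGerm E) B)
  have hφ : Function.Injective φ :=
    (IsLocalization.injective (Localization.AtPrime p) p.primeCompl_le_nonZeroDivisors).comp
      (FaithfulSMul.algebraMap_injective (AnalyticGerm E) B)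
  have : CharZero (Localization.AtPrime p) := charZero_of_injective_ringHom hφ
  have hdvd (v : E) : φ f ∣ φ (dirDeriv v f) :=
    map_dvd (algebraMap B (Localization.AtPrime p)) (dvd_of_mem_blowupChart hf ⟨v, rfl⟩)
  have hunit_φ : IsUnit (φ f) :=
    isUnit_map_of_dvd_dirDeriv (V := Localization.AtPrime p) (φ := φ) (f := f)
      ((map_ne_zero_iff φ hφ).2 hf) hpow hdvd
  exact (IsLocalization.AtPrime.isUnit_to_map_iff _ p _).1 hunit_φ hfp

/-- The ideal of germs that are `O(b)` at `0`. -/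
noncomputable def bigOIdeal (b : E → ℝ) : Ideal (AnalyticGerm E) where
  carrier := {φ | φ.rep =O[𝓝 0] b}
  zero_mem' := rep_zero.trans_isBigO (Asymptotics.isBigO_zero _ _)
  add_mem' {φ ψ} hφ hψ := (rep_add φ ψ).trans_isBigO (hφ.add hψ)
  smul_mem' φ ψ hψ := by
    have hφψ := (φ.analyticAt_rep.continuousAt.isBigO_one ℝ).mul hψ
    exact (rep_mul φ ψ).trans_isBigO (hφψ.congr_right fun x ↦ one_mul (b x))

theorem bigOIdeal_mul_le (b c : E → ℝ) : bigOIdeal b * bigOIdeal c ≤ bigOIdeal (b * c) :=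
  Ideal.mul_le.2 fun φ hφ ψ hψ ↦ (rep_mul φ ψ).trans_isBigO (hφ.mul hψ)

theorem bigOIdeal_pow_le (b : E → ℝ) (n : ℕ) : bigOIdeal b ^ (n + 1) ≤ bigOIdeal (b ^ (n + 1)) := by
  induction n with
  | zero => simp
  | succ n ih =>
    rw [pow_succ, pow_succ b]
    exact (Ideal.mul_mono_left ih).trans (bigOIdeal_mul_le _ _)

theorem mk_mem_bigOIdeal {b : E → ℝ} (hh : AnalyticAt ℝ h 0) :
    mk h hh ∈ bigOIdeal b ↔ h =O[𝓝 0] b :=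
  Asymptotics.isBigO_congr (rep_mk hh) .rfl

end AnalyticGerm

open AnalyticGerm in
theorem exists_pow_isBigO_abs_add_norm_fderiv_pow {E : Type*} [NormedAddCommGroup E]
    [NormedSpace ℝ E] [FiniteDimensional ℝ E] {h : E → ℝ} (hh : AnalyticAt ℝ h 0) :
    ∃ n : ℕ, (h ^ n) =O[𝓝 0] (fun x ↦ (|h x| + ‖fderiv ℝ h x‖) ^ (n + 1)) := by
  set b : E → ℝ := fun x ↦ |h x| + ‖fderiv ℝ h x‖
  obtain ⟨n, hn⟩ := exists_pow_mem_span_dirDeriv_pow (mk h hh)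
  have hle : Ideal.span (insert (mk h hh) (Set.range fun v ↦ dirDeriv v (mk h hh))) ≤
      bigOIdeal b := by
    refine Ideal.span_le.2 (Set.insert_subset ?_ ?_)
    · refine (mk_mem_bigOIdeal hh).2 (.of_bound' (.of_forall fun x ↦ ?_))
      exact (le_add_of_nonneg_right (norm_nonneg _)).trans (le_abs_self _)
    · rintro _ ⟨v, rfl⟩
      simp only [dirDeriv_mk, SetLike.mem_coe, mk_mem_bigOIdeal]
      refine .of_bound ‖v‖ (.of_forall fun x ↦ ?_)
      rw [mul_comm]
      refine ((fderiv ℝ h x).le_opNorm v).trans (mul_le_mul_of_nonneg_right ?_ (norm_nonneg v))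
      exact (le_add_of_nonneg_left (abs_nonneg _)).trans (le_abs_self _)
  refine ⟨n, (mk_mem_bigOIdeal (hh.pow n)).1 ?_⟩
  exact bigOIdeal_pow_le b n (Ideal.pow_right_mono hle _ hn)

theorem exists_eventually_rpow_le_sq_of_pow_le {C : ℝ} (hC : 0 ≤ C) (n : ℕ) :
    ∃ α ∈ Set.Ioo (1 : ℝ) 2, ∀ᶠ w in 𝓝 (0 : ℝ), ∀ d, 0 ≤ w → 0 ≤ d →
      w ^ n ≤ C * (w + d) ^ (n + 1) → w ^ α ≤ d ^ 2 := by
  -- Any `θ < 1` larger than `n / (n + 1)` and `1 / 2` would do; `ε = θ (n + 1) - n`.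
  set θ : ℝ := (n + 2) / (n + 3) with hθ_def
  set ε : ℝ := 2 / (n + 3)
  have hθε : θ * ↑(n + 1) = ε + n := by
    push_cast [θ, ε]
    field
  have hε : 0 < ε := by positivity
  have hθ : 1 / 2 < θ ∧ θ < 1 := by
    rw [hθ_def, div_lt_div_iff₀ two_pos (by positivity), div_lt_one (by positivity)]
    constructor <;> linarith [n.cast_nonneg (α := ℝ)]
  have hlim : Tendsto (fun w : ℝ ↦ C * 2 ^ (n + 1) * w ^ ε) (𝓝 0) (𝓝 0) := by
    simpa [hε.ne'] using
      ((continuousAt_rpow_const 0 ε (.inr hε.le)).tendsto.const_mul (C * 2 ^ (n + 1)))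
  refine ⟨θ * 2, ⟨by linarith, by linarith⟩, ?_⟩
  filter_upwards [hlim.eventually_lt_const one_pos, eventually_le_nhds one_pos]
    with w hw_lim hw1 d hw hd hle
  obtain rfl | hw_pos := hw.eq_or_lt
  · rw [zero_rpow (by linarith)]
    positivity
  by_contra! hlt
  rw [rpow_mul hw, rpow_two] at hlt
  have hd_lt : d < w ^ θ := lt_of_pow_lt_pow_left₀ 2 (by positivity) hlt
  have hw_le : w ≤ w ^ θ := by
    simpa using rpow_le_rpow_of_exponent_ge hw_pos hw1 hθ.2.le
  have hpow_lt : w ^ n < w ^ n := calc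
    w ^ n ≤ C * (w + d) ^ (n + 1) := hle
    _ ≤ C * (2 * w ^ θ) ^ (n + 1) := by gcongr; linarith
    _ = C * 2 ^ (n + 1) * w ^ ε * w ^ n := by
      rw [mul_pow, ← rpow_mul_natCast hw, hθε, rpow_add_natCast hw_pos.ne']
      ring
    _ < w ^ n := mul_lt_of_lt_one_left (by positivity) hw_lim
  exact hpow_lt.false

theorem exists_eventually_abs_rpow_le_norm_fderiv_sq {E : Type*} [NormedAddCommGroup E]
    [NormedSpace ℝ E] [FiniteDimensional ℝ E] {h : E → ℝ} (hh : AnalyticAt ℝ h 0) (h0 : h 0 = 0) :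
    ∃ α ∈ Set.Ioo (1 : ℝ) 2, ∀ᶠ x in 𝓝 0, |h x| ^ α ≤ ‖fderiv ℝ h x‖ ^ 2 := by
  obtain ⟨n, hn⟩ := exists_pow_isBigO_abs_add_norm_fderiv_pow hh
  obtain ⟨C, hC0, hC⟩ := hn.exists_nonneg
  obtain ⟨α, hα, hsmall⟩ := exists_eventually_rpow_le_sq_of_pow_le hC0 n
  have habs : Tendsto (fun x ↦ |h x|) (𝓝 0) (𝓝 0) := by
    simpa [h0] using hh.continuousAt.tendsto.abs
  refine ⟨α, hα, ?_⟩
  filter_upwards [hC.bound, habs.eventually hsmall] with x hx hx_small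
  refine hx_small _ (abs_nonneg _) (norm_nonneg _) ?_
  simpa [abs_of_nonneg (add_nonneg (abs_nonneg (h x)) (norm_nonneg (fderiv ℝ h x)))] using hx

theorem stmt_17_general {E : Type*} [NormedAddCommGroup E] [NormedSpace ℝ E]
    [FiniteDimensional ℝ E] {W : E → ℝ} {x₀ : E} (hW : AnalyticAt ℝ W x₀) :
    ∃ α ∈ Set.Ioo (1 : ℝ) 2, ∀ᶠ x in 𝓝 x₀, |W x - W x₀| ^ α ≤ ‖fderiv ℝ W x‖ ^ 2 := by
  have hh : AnalyticAt ℝ (fun x ↦ W (x₀ + x) - W x₀) 0 := by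
    refine AnalyticAt.sub ?_ analyticAt_const
    exact AnalyticAt.comp_of_eq hW (analyticAt_const.add analyticAt_id) (add_zero x₀)
  obtain ⟨α, hα, hineq⟩ := exists_eventually_abs_rpow_le_norm_fderiv_sq hh (by simp)
  refine ⟨α, hα, ?_⟩
  rw [← add_zero x₀, ← map_add_left_nhds x₀ 0, eventually_map, add_zero]
  simpa only [fderiv_sub_const, fderiv_comp_add_left] using hineq

/-- Łojasiewicz-type gradient inequality: if `W` is real analytic near `0`
with `∇W(0) = 0`, then on some neighborhood of `0` and for some `α ∈ (1,2)`,
`|∇W(x)|² ≥ |W(x) - W(0)|^α`. -/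
theorem stmt_17 (k : ℕ) (W : EuclideanSpace ℝ (Fin k) → ℝ)
    (hW : AnalyticAt ℝ W 0) (hcrit : gradient W 0 = 0) :
    ∃ α ∈ Set.Ioo (1 : ℝ) 2, ∃ δ > 0, ∀ x : EuclideanSpace ℝ (Fin k), ‖x‖ < δ →
      ‖gradient W x‖ ^ 2 ≥ |W x - W 0| ^ α := by
  simpa only [gradient, LinearIsometryEquiv.norm_map, Metric.eventually_nhds_iff, dist_zero_right]
    using stmt_17_general hW
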